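/- Let H₁ and H₂ be finite-dimensional Hilbert spaces and K an invertible matrix on H₁ ⊗ H₂. Let p, q, r, s be real parameters with 0 < p, q ≤ 1, −1 ≤ r < 0, q + r > 0, p + q + r > 0, and (q+r)/(p+q+r) ≤ s < 1/(p+q+r). For A positive definite on H₁ ⊗ H₂ and B positive definite on H₂, define Q(A,B) := inf_C Tr[(A^{p/2} K (I₁ ⊗ B^{q/2} C^r B^{q/2}) K† A^{p/2})^s], the infimum taken over all positive definite density matrices C on H₂. Then Q is jointly log-concave: for all positive definite A₀, A₁ on H₁ ⊗ H₂, all positive definite B₀, B₁ on H₂, and all t ∈ [0,1], Q(t·A₀+(1−t)·A₁, t·B₀+(1−t)·B₁) ≥ Q(A₀,B₀)^t · Q(A₁,B₁)^{1−t}. -/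

import Mathlib

open scoped Kronecker ComplexOrder
open Matrix

/-- Real power of a (Hermitian, in practice positive semidefinite) matrix, defined spectrally:
positive eigenvalues are raised to the power `t`, zero (and negative) eigenvalues are sent to `0`. -/
noncomputable def matPow {n : Type*} [Fintype n] [DecidableEq n]
    (M : Matrix n n ℂ) (t : ℝ) : Matrix n n ℂ :=
  if hM : M.IsHermitian then
    (hM.eigenvectorUnitary : Matrix n n ℂ) *
      Matrix.diagonal (fun i =>
        ((if 0 < hM.eigenvalues i then (hM.eigenvalues i) ^ t else 0 : ℝ) : ℂ)) *
      (star (hM.eigenvectorUnitary : Matrix n n ℂ))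
  else 0

/-- Partial trace over the first tensor factor. -/
noncomputable def ptraceFst {m n : Type*} [Fintype m] [Fintype n]
    (M : Matrix (m × n) (m × n) ℂ) : Matrix n n ℂ :=
  Matrix.of fun j j' => ∑ i, M (i, j) (i, j')

/-- Partial trace over the second tensor factor. -/
noncomputable def ptraceSnd {m n : Type*} [Fintype m] [Fintype n]
    (M : Matrix (m × n) (m × n) ℂ) : Matrix m m ℂ :=
  Matrix.of fun i i' => ∑ j, M (i, j) (i', j)

/-- A density matrix: positive semidefinite with unit trace. -/
def IsDensity {n : Type*} [Fintype n] [DecidableEq n] (ρ : Matrix n n ℂ) : Prop :=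
  ρ.PosSemidef ∧ ρ.trace = 1

/-- The optimized trace functional of Statement 1:
`Q(A,B) = inf_C Tr[(A^{p/2} K (I₁ ⊗ B^{q/2} C^r B^{q/2}) K† A^{p/2})^s]`,
the infimum over all positive definite density matrices `C` on `H₂`. -/
noncomputable def Qinf {n₁ n₂ : Type*} [Fintype n₁] [DecidableEq n₁]
    [Fintype n₂] [DecidableEq n₂] (K : Matrix (n₁ × n₂) (n₁ × n₂) ℂ) (p q r s : ℝ)
    (A : Matrix (n₁ × n₂) (n₁ × n₂) ℂ) (B : Matrix n₂ n₂ ℂ) : ℝ :=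
  sInf {x | ∃ C : Matrix n₂ n₂ ℂ, C.PosDef ∧ C.trace = 1 ∧
    x = (Matrix.trace (matPow
      (matPow A (p / 2) * K *
        ((1 : Matrix n₁ n₁ ℂ) ⊗ₖ (matPow B (q / 2) * matPow C r * matPow B (q / 2))) *
        Kᴴ * matPow A (p / 2)) s)).re}

open scoped MatrixOrder

/-!
Let `1/s = 1/u + 1/v` with `u ≥ 1`. By Hölder's inequality `Tr (P^{1/2} X P^{1/2})^s` is the minimum
over `Z > 0` of `(Tr (P^{1/2} Z P^{1/2})^v)^{s/v} (Tr (Z^{-1/2} X Z^{-1/2})^u)^{s/u}`. A minimum of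
log-concave functions being log-concave, this separates `A` from `(B, C)`; the right choice is
`u = s(p+q+r)/(q+r)`, `v = s(p+q+r)/p`. The first factor is log-concave in `A` because `vp ≤ 1`, by
Epstein's theorem, which follows from Lieb's concavity theorem and the same variational principle.

In the second factor the infimum over `C` is turned into a supremum. With `Φ` the adjoint of the
completely positive map `Y ↦ K (1 ⊗ Y) K†`, the minimum over `C` of
`(Tr (K (1 ⊗ B^{q/2} C^r B^{q/2}) K†)^u)^{1/u}` equals the maximum over densities `W` of
`(Tr (B^{q/2} Φ(W^{1-1/u}) B^{q/2})^{1/(1-r)})^{1-r}`: one inequality is Hölder and reverse Hölder,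
the other is the first-order optimality condition at a minimizer `C`. The dual objective is jointly
log-concave in `(B, W)`, again by factorization and Epstein's theorem, and partial maximization
preserves joint log-concavity.
-/

section MatrixPower

variable {n : Type*}

lemma convex_posDef : Convex ℝ {A : Matrix n n ℂ | A.PosDef} :=
  convex_iff_forall_pos.mpr fun _ hA _ hB _ _ ha hb _ => (hA.smul ha).add (hB.smul hb)

variable [Fintype n] [DecidableEq n] {A : Matrix n n ℂ}

lemma rpow_eq_conj_diagonal (hA : A.PosDef) (t : ℝ) :
    A ^ t = (hA.1.eigenvectorUnitary : Matrix n n ℂ) *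
      diagonal (fun i => ((hA.1.eigenvalues i ^ t : ℝ) : ℂ)) *
      (hA.1.eigenvectorUnitary : Matrix n n ℂ)ᴴ := by
  rw [CFC.rpow_eq_cfc_real hA.posSemidef.nonneg, hA.1.cfc_eq, IsHermitian.cfc,
    Unitary.conjStarAlgAut_apply]
  rfl

lemma matPow_eq_rpow (hA : A.PosDef) (t : ℝ) : matPow A t = A ^ t := by
  simp only [matPow, dif_pos hA.1, hA.eigenvalues_pos, if_true, rpow_eq_conj_diagonal hA,
    star_eq_conjTranspose]

lemma exists_unitary_rpow_eq (hA : A.PosDef) :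
    ∃ (U : Matrix n n ℂ) (a : n → ℝ), Uᴴ * U = 1 ∧ (∀ i, 0 < a i) ∧
      ∀ t : ℝ, A ^ t = U * diagonal (fun i => ((a i ^ t : ℝ) : ℂ)) * Uᴴ :=
  ⟨_, _, Unitary.coe_star_mul_self hA.1.eigenvectorUnitary, hA.eigenvalues_pos,
    rpow_eq_conj_diagonal hA⟩

lemma posDef_rpow (hA : A.PosDef) (t : ℝ) : (A ^ t).PosDef :=
  (IsStrictlyPositive.rpow A t hA.isStrictlyPositive).posDef

lemma conjTranspose_rpow (A : Matrix n n ℂ) (t : ℝ) : (A ^ t)ᴴ = A ^ t :=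
  (CFC.rpow_nonneg (a := A) (y := t)).posSemidef.1

lemma rpow_mul_rpow (hA : A.PosDef) (s t : ℝ) : A ^ s * A ^ t = A ^ (s + t) :=
  (CFC.rpow_add hA.isUnit).symm

lemma rpow_mul_rpow_mul (hA : A.PosDef) (s t : ℝ) (M : Matrix n n ℂ) :
    A ^ s * (A ^ t * M) = A ^ (s + t) * M := by
  rw [← mul_assoc, rpow_mul_rpow hA]

lemma rpow_half_mul_rpow_half (hA : A.PosDef) : A ^ (1 / 2 : ℝ) * A ^ (1 / 2 : ℝ) = A := by
  rw [rpow_mul_rpow hA, add_halves, CFC.rpow_one A hA.posSemidef.nonneg]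

lemma rpow_rpow (hA : A.PosDef) (s t : ℝ) : (A ^ s) ^ t = A ^ (s * t) := by
  rcases eq_or_ne s 0 with rfl | hs
  · rw [zero_mul, CFC.rpow_zero A hA.posSemidef.nonneg, CFC.one_rpow]
  · exact CFC.rpow_rpow A s t hs hA.isStrictlyPositive

lemma rpow_neg_one_eq_inv (hA : A.PosDef) : A ^ (-1 : ℝ) = A⁻¹ := by
  rw [← CFC.inverse_eq_rpow_neg_one hA.isStrictlyPositive, nonsing_inv_eq_ringInverse]

lemma smul_rpow (hA : A.PosDef) {c : ℝ} (hc : 0 < c) (t : ℝ) : (c • A) ^ t = c ^ t • A ^ t := by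
  rw [CFC.rpow_eq_cfc_real (hA.smul hc).posSemidef.nonneg,
    CFC.rpow_eq_cfc_real hA.posSemidef.nonneg,
    ← cfc_comp_const_mul c (fun x => x ^ t) A ((A.finite_real_spectrum.image _).continuousOn _)
      hA.1.isSelfAdjoint,
    ← cfc_const_mul (c ^ t) (fun x => x ^ t) A (A.finite_real_spectrum.continuousOn _)]
  refine cfc_congr fun x hx => Real.mul_rpow hc.le ?_
  exact spectrum_nonneg_of_nonneg hA.posSemidef.nonneg hx

lemma rpow_le_rpow {B : Matrix n n ℂ} {p : ℝ} (hp₀ : 0 ≤ p) (hp₁ : p ≤ 1) (hAB : A ≤ B) :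
    A ^ p ≤ B ^ p := by
  open scoped Matrix.Norms.L2Operator in
  exact CFC.rpow_le_rpow ⟨hp₀, hp₁⟩ hAB

lemma convexOn_rpow_neg_one : ConvexOn ℝ {A : Matrix n n ℂ | A.PosDef} (fun A => A ^ (-1 : ℝ)) := by
  open scoped Matrix.Norms.L2Operator in
  have h := CStarAlgebra.convexOn_ringInverse (A := Matrix n n ℂ)
  simp only [isStrictlyPositive_iff_posDef] at h
  exact h.congr fun A hA => CFC.inverse_eq_rpow_neg_one hA.isStrictlyPositive

lemma concaveOn_rpow_posDef {p : ℝ} (hp₀ : 0 ≤ p) (hp₁ : p ≤ 1) :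
    ConcaveOn ℝ {A : Matrix n n ℂ | A.PosDef} (fun A => A ^ p) := by
  open scoped Matrix.Norms.L2Operator in
  exact (CFC.concaveOn_rpow ⟨hp₀, hp₁⟩).subset (fun A hA => hA.posSemidef.nonneg) convex_posDef

lemma continuousOn_rpow_posDef (t : ℝ) :
    ContinuousOn (fun A : Matrix n n ℂ => A ^ t) {A | A.PosDef} := by
  open scoped Matrix.Norms.L2Operator in
  simpa only [isStrictlyPositive_iff_posDef] using CFC.continuousOn_rpow (A := Matrix n n ℂ) t

end MatrixPower

section TracePower

variable {m n : Type*} [Fintype m] [Fintype n]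

/-- The real part of the trace, as a real-linear functional. -/
noncomputable def reTrace : Matrix n n ℂ →ₗ[ℝ] ℝ :=
  Complex.reLm ∘ₗ traceLinearMap n ℝ ℂ

lemma reTrace_mul_comm (A : Matrix m n ℂ) (B : Matrix n m ℂ) :
    reTrace (A * B) = reTrace (B * A) :=
  congrArg Complex.re (trace_mul_comm A B)

lemma reTrace_nonneg {A : Matrix n n ℂ} (hA : A.PosSemidef) : 0 ≤ reTrace A :=
  (Complex.nonneg_iff.mp hA.trace_nonneg).1

lemma reTrace_pos [Nonempty n] {A : Matrix n n ℂ} (hA : A.PosDef) : 0 < reTrace A :=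
  (Complex.pos_iff.mp hA.trace_pos).1

lemma nonempty_of_reTrace_eq_one {A : Matrix n n ℂ} (hA : reTrace A = 1) : Nonempty n := by
  by_contra hn
  rw [not_nonempty_iff] at hn
  simp [Subsingleton.elim A 0] at hA

variable [DecidableEq m] [DecidableEq n]

lemma reTrace_cfc {A : Matrix n n ℂ} (hA : A.IsHermitian) (f : ℝ → ℝ) :
    reTrace (cfc f A) = ∑ i, f (hA.eigenvalues i) := by
  rw [hA.cfc_eq, IsHermitian.cfc, Unitary.conjStarAlgAut_apply]
  simp [reTrace, traceLinearMap, trace_mul_cycle, trace_diagonal]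

/-- The trace of the power, `Tr M ^ s`. -/
noncomputable def tracePow (M : Matrix n n ℂ) (s : ℝ) : ℝ := reTrace (M ^ s)

lemma tracePow_nonneg (M : Matrix n n ℂ) (s : ℝ) : 0 ≤ tracePow M s :=
  reTrace_nonneg (CFC.rpow_nonneg (a := M) (y := s)).posSemidef

lemma tracePow_pos [Nonempty n] {M : Matrix n n ℂ} (hM : M.PosDef) (s : ℝ) : 0 < tracePow M s :=
  reTrace_pos (posDef_rpow hM s)

lemma tracePow_of_isEmpty [IsEmpty n] (M : Matrix n n ℂ) (s : ℝ) : tracePow M s = 0 := by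
  rw [tracePow, Subsingleton.elim (M ^ s) 0, map_zero]

lemma tracePow_smul {M : Matrix n n ℂ} (hM : M.PosDef) {c : ℝ} (hc : 0 < c) (s : ℝ) :
    tracePow (c • M) s = c ^ s * tracePow M s := by
  rw [tracePow, smul_rpow hM hc, map_smul, smul_eq_mul, tracePow]

lemma tracePow_rpow {M : Matrix n n ℂ} (hM : M.PosDef) (a s : ℝ) :
    tracePow (M ^ a) s = tracePow M (a * s) := by
  rw [tracePow, rpow_rpow hM, tracePow]

/-- `G Gᴴ` and `Gᴴ G` have the same characteristic polynomial, hence the same eigenvalues. -/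
lemma tracePow_mul_conjTranspose (G : Matrix n n ℂ) (s : ℝ) :
    tracePow (G * Gᴴ) s = tracePow (Gᴴ * G) s := by
  have hl := posSemidef_self_mul_conjTranspose G
  have hr := posSemidef_conjTranspose_mul_self G
  have heig : hl.1.eigenvalues = hr.1.eigenvalues :=
    (hl.1.eigenvalues_eq_eigenvalues_iff hr.1).mpr (charpoly_mul_comm G Gᴴ)
  rw [tracePow, tracePow, CFC.rpow_eq_cfc_real hl.nonneg, CFC.rpow_eq_cfc_real hr.nonneg,
    reTrace_cfc hl.1, reTrace_cfc hr.1, heig]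

/-- The congruence `P ^ (1/2) * X * P ^ (1/2)` of `X` by the square root of `P`. -/
noncomputable def sandwich (P X : Matrix n n ℂ) : Matrix n n ℂ :=
  P ^ (1 / 2 : ℝ) * X * P ^ (1 / 2 : ℝ)

lemma posDef_mul_mul_conjTranspose {X G : Matrix n n ℂ} (hX : X.PosDef) (hG : IsUnit G) :
    (G * X * Gᴴ).PosDef :=
  (hG.posDef_star_right_conjugate_iff).mpr hX

lemma posDef_sandwich {P X : Matrix n n ℂ} (hP : P.PosDef) (hX : X.PosDef) :
    (sandwich P X).PosDef := by
  simpa only [conjTranspose_rpow, sandwich] using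
    posDef_mul_mul_conjTranspose hX (posDef_rpow hP (1 / 2)).isUnit

lemma sandwich_smul_smul {P : Matrix n n ℂ} (hP : P.PosDef) {c : ℝ} (hc : 0 < c) (d : ℝ)
    (X : Matrix n n ℂ) : sandwich (c • P) (d • X) = (c * d) • sandwich P X := by
  have hsq : c ^ (1 / 2 : ℝ) * c ^ (1 / 2 : ℝ) = c := by
    rw [← Real.rpow_add hc, add_halves, Real.rpow_one]
  simp only [sandwich, smul_rpow hP hc, smul_mul_assoc, mul_smul_comm, smul_smul]
  rw [← mul_assoc, mul_right_comm (c ^ _), hsq]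

lemma sandwich_rpow {P : Matrix n n ℂ} (hP : P.PosDef) (a : ℝ) (X : Matrix n n ℂ) :
    sandwich (P ^ a) X = P ^ (a / 2) * X * P ^ (a / 2) := by
  rw [sandwich, rpow_rpow hP, mul_one_div]

lemma tracePow_sandwich_mul_conjTranspose {P : Matrix n n ℂ} (hP : P.PosDef) (G : Matrix n n ℂ)
    (s : ℝ) : tracePow (sandwich P (G * Gᴴ)) s = tracePow (Gᴴ * P * G) s := by
  have h := tracePow_mul_conjTranspose (P ^ (1 / 2 : ℝ) * G) s
  rw [conjTranspose_mul, conjTranspose_rpow] at h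
  simpa only [sandwich, Matrix.mul_assoc, rpow_mul_rpow_mul hP, add_halves,
    CFC.rpow_one P hP.posSemidef.nonneg] using h

lemma tracePow_sandwich_comm {P X : Matrix n n ℂ} (hP : P.PosDef) (hX : X.PosDef) (s : ℝ) :
    tracePow (sandwich P X) s = tracePow (sandwich X P) s := by
  have h := tracePow_sandwich_mul_conjTranspose hP (X ^ (1 / 2 : ℝ)) s
  rwa [conjTranspose_rpow, rpow_half_mul_rpow_half hX] at h

/-- The power `M ^ u` normalised to trace one. -/
noncomputable def powState (M : Matrix n n ℂ) (u : ℝ) : Matrix n n ℂ :=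
  (tracePow M u)⁻¹ • M ^ u

lemma posDef_powState [Nonempty n] {M : Matrix n n ℂ} (hM : M.PosDef) (u : ℝ) :
    (powState M u).PosDef :=
  (posDef_rpow hM u).smul (inv_pos.mpr (tracePow_pos hM u))

lemma reTrace_powState [Nonempty n] {M : Matrix n n ℂ} (hM : M.PosDef) (u : ℝ) :
    reTrace (powState M u) = 1 := by
  rw [powState, map_smul, smul_eq_mul]
  exact inv_mul_cancel₀ (tracePow_pos hM u).ne'

lemma powState_rpow [Nonempty n] {M : Matrix n n ℂ} (hM : M.PosDef) (u x : ℝ) :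
    powState M u ^ x = tracePow M u ^ (-x) • M ^ (u * x) := by
  rw [powState, smul_rpow (posDef_rpow hM u) (inv_pos.mpr (tracePow_pos hM u)), rpow_rpow hM,
    Real.inv_rpow (tracePow_nonneg M u), Real.rpow_neg (tracePow_nonneg M u)]

lemma powState_rpow_inv [Nonempty n] {M : Matrix n n ℂ} (hM : M.PosDef) {u : ℝ} (hu : u ≠ 0) :
    powState M u ^ u⁻¹ = tracePow M u ^ (-u⁻¹) • M := by
  rw [powState_rpow hM, mul_inv_cancel₀ hu, CFC.rpow_one M hM.posSemidef.nonneg]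

end TracePower

section Holder

lemma le_rpow_mul_rpow {a x w : ℝ} (ha : 1 ≤ a) (hx : 0 < x) (hw : 0 < w) :
    a * x + (1 - a) * w ≤ x ^ a * w ^ (1 - a) := by
  have ha₀ : 0 < a := by linarith
  have hmean := Real.geom_mean_le_arith_mean2_weighted (w₁ := a⁻¹) (w₂ := 1 - a⁻¹)
    (p₁ := x ^ a * w ^ (1 - a)) (p₂ := w) (by positivity)
    (sub_nonneg.mpr (inv_le_one_of_one_le₀ ha)) (by positivity) hw.le (by ring)
  have hgeom : (x ^ a * w ^ (1 - a)) ^ a⁻¹ * w ^ (1 - a⁻¹) = x := by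
    rw [Real.mul_rpow (by positivity) (by positivity), ← Real.rpow_mul hx.le,
      ← Real.rpow_mul hw.le, mul_assoc, ← Real.rpow_add hw, mul_inv_cancel₀ ha₀.ne',
      show (1 - a) * a⁻¹ + (1 - a⁻¹) = 0 by field_simp; ring, Real.rpow_one, Real.rpow_zero,
      mul_one]
  rw [hgeom] at hmean
  calc a * x + (1 - a) * w
      ≤ a * (a⁻¹ * (x ^ a * w ^ (1 - a)) + (1 - a⁻¹) * w) + (1 - a) * w := by gcongr
    _ = x ^ a * w ^ (1 - a) := by field_simp; ring

variable {m n : Type*} [Fintype m] [DecidableEq m] [Fintype n] [DecidableEq n]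

lemma reTrace_diagonal_mul_mul_diagonal (a : n → ℝ) (b : m → ℝ) (T : Matrix n m ℂ) :
    reTrace (diagonal (fun i => (a i : ℂ)) * T * diagonal (fun j => (b j : ℂ)) * Tᴴ) =
      ∑ i, ∑ j, a i * b j * Complex.normSq (T i j) := by
  have hterm : ∀ i j, (a i : ℂ) * T i j * (b j : ℂ) * star (T i j) =
      ((a i * b j * Complex.normSq (T i j) : ℝ) : ℂ) := fun i j => by
    push_cast
    rw [Complex.normSq_eq_conj_mul_self, starRingEnd_apply]
    ring
  change Complex.re (trace _) = _
  simp only [trace, diag_apply, mul_apply (M := _ * diagonal _), mul_diagonal, diagonal_mul,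
    conjTranspose_apply, hterm, ← Complex.ofReal_sum, Complex.ofReal_re]

lemma reTrace_conj_diagonal_mul_conj_diagonal (U : Matrix n n ℂ) (Y : Matrix m m ℂ) (a : n → ℝ)
    (b : m → ℝ) (V : Matrix n m ℂ) :
    reTrace (U * diagonal (fun i => (a i : ℂ)) * Uᴴ * V *
        (Y * diagonal (fun j => (b j : ℂ)) * Yᴴ) * Vᴴ) =
      ∑ i, ∑ j, a i * b j * Complex.normSq ((Uᴴ * V * Y) i j) := by
  rw [← reTrace_diagonal_mul_mul_diagonal]
  simp only [Matrix.mul_assoc, conjTranspose_mul, conjTranspose_conjTranspose]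
  rw [reTrace_mul_comm U]
  simp only [Matrix.mul_assoc]

/-- In eigenbases of `M` and `W` all the traces `Tr M ^ s V W ^ t Vᴴ` are nonnegative combinations
of the numbers `μ i ^ s * w j ^ t`, with weights independent of the exponents. -/
lemma exists_reTrace_rpow_mul_rpow_eq_sum {M : Matrix n n ℂ} {W : Matrix m m ℂ} (hM : M.PosDef)
    (hW : W.PosDef) (V : Matrix n m ℂ) :
    ∃ (μ : n → ℝ) (w : m → ℝ) (d : n → m → ℝ), (∀ i, 0 < μ i) ∧ (∀ j, 0 < w j) ∧
      (∀ i j, 0 ≤ d i j) ∧ ∀ s t : ℝ, reTrace (M ^ s * V * W ^ t * Vᴴ) =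
        ∑ i, ∑ j, μ i ^ s * w j ^ t * d i j := by
  obtain ⟨U, a, -, ha, hMU⟩ := exists_unitary_rpow_eq hM
  obtain ⟨Y, b, -, hb, hWY⟩ := exists_unitary_rpow_eq hW
  refine ⟨a, b, fun i j => Complex.normSq ((Uᴴ * V * Y) i j), ha, hb,
    fun i j => Complex.normSq_nonneg _, fun s t => ?_⟩
  rw [hMU, hWY, reTrace_conj_diagonal_mul_conj_diagonal]

lemma reTrace_rpow_mul_rpow_le {M : Matrix n n ℂ} {W : Matrix m m ℂ} (hM : M.PosDef)
    (hW : W.PosDef) (V : Matrix n m ℂ) {a : ℝ} (ha₀ : 0 ≤ a) (ha₁ : a ≤ 1) :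
    reTrace (M ^ a * V * W ^ (1 - a) * Vᴴ) ≤
      a * reTrace (M * V * Vᴴ) + (1 - a) * reTrace (V * W * Vᴴ) := by
  obtain ⟨μ, w, d, hμ, hw, hd, hsum⟩ := exists_reTrace_rpow_mul_rpow_eq_sum hM hW V
  have hM₁ := hsum 1 0
  have hW₁ := hsum 0 1
  simp only [CFC.rpow_zero M hM.posSemidef.nonneg, CFC.rpow_one M hM.posSemidef.nonneg,
    CFC.rpow_zero W hW.posSemidef.nonneg, CFC.rpow_one W hW.posSemidef.nonneg, Matrix.mul_one,
    Matrix.one_mul, Real.rpow_one, Real.rpow_zero, mul_one, one_mul] at hM₁ hW₁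
  rw [hsum, hM₁, hW₁]
  simp only [Finset.mul_sum, ← Finset.sum_add_distrib, ← mul_assoc, ← add_mul]
  gcongr with i _ j _
  · exact hd i j
  · exact Real.geom_mean_le_arith_mean2_weighted ha₀ (by linarith) (hμ i).le (hw j).le (by ring)

lemma le_reTrace_rpow_mul_rpow {M W : Matrix n n ℂ} (hM : M.PosDef) (hW : W.PosDef) {a : ℝ}
    (ha : 1 ≤ a) : a * reTrace M + (1 - a) * reTrace W ≤ reTrace (M ^ a * W ^ (1 - a)) := by
  obtain ⟨μ, w, d, hμ, hw, hd, hsum⟩ := exists_reTrace_rpow_mul_rpow_eq_sum hM hW 1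
  have hM₁ := hsum 1 0
  have hW₁ := hsum 0 1
  simp only [CFC.rpow_zero M hM.posSemidef.nonneg, CFC.rpow_one M hM.posSemidef.nonneg,
    CFC.rpow_zero W hW.posSemidef.nonneg, CFC.rpow_one W hW.posSemidef.nonneg, Real.rpow_one,
    Real.rpow_zero, mul_one, one_mul, conjTranspose_one] at hM₁ hW₁ hsum
  rw [hsum, hM₁, hW₁]
  simp only [Finset.mul_sum, ← Finset.sum_add_distrib, ← mul_assoc, ← add_mul]
  gcongr with i _ j _
  · exact hd i j
  · exact le_rpow_mul_rpow ha (hμ i) (hw j)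

lemma reTrace_rpow_mul_rpow_le_one {M W : Matrix n n ℂ} (hM : M.PosDef) (hW : W.PosDef)
    (hM₁ : reTrace M = 1) (hW₁ : reTrace W = 1) {a : ℝ} (ha₀ : 0 ≤ a) (ha₁ : a ≤ 1) :
    reTrace (M ^ a * W ^ (1 - a)) ≤ 1 := by
  have h := reTrace_rpow_mul_rpow_le hM hW 1 ha₀ ha₁
  simp only [conjTranspose_one, Matrix.mul_one, Matrix.one_mul, hM₁, hW₁] at h
  linarith

lemma reTrace_mul_rpow_le_tracePow {M W : Matrix n n ℂ} (hM : M.PosDef) (hW : W.PosDef)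
    (hW₁ : reTrace W = 1) {u : ℝ} (hu : 1 ≤ u) :
    reTrace (M * W ^ (1 - u⁻¹)) ≤ tracePow M u ^ u⁻¹ := by
  have := nonempty_of_reTrace_eq_one hW₁
  have hu₀ : 0 < u := by linarith
  have h := reTrace_rpow_mul_rpow_le_one (posDef_powState hM u) hW (reTrace_powState hM u) hW₁
    (inv_nonneg.mpr hu₀.le) (inv_le_one_of_one_le₀ hu)
  rwa [powState_rpow_inv hM hu₀.ne', smul_mul_assoc, map_smul, smul_eq_mul,
    Real.rpow_neg (tracePow_nonneg M u),
    inv_mul_le_one₀ (Real.rpow_pos_of_pos (tracePow_pos hM u) _)] at h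

lemma tracePow_le_reTrace_mul_rpow {M W : Matrix n n ℂ} (hM : M.PosDef) (hW : W.PosDef)
    (hW₁ : reTrace W = 1) {u : ℝ} (hu₀ : 0 < u) (hu₁ : u ≤ 1) :
    tracePow M u ^ u⁻¹ ≤ reTrace (M * W ^ (1 - u⁻¹)) := by
  have := nonempty_of_reTrace_eq_one hW₁
  have h := le_reTrace_rpow_mul_rpow (posDef_powState hM u) hW ((one_le_inv₀ hu₀).mpr hu₁)
  rwa [powState_rpow_inv hM hu₀.ne', smul_mul_assoc, map_smul, smul_eq_mul,
    Real.rpow_neg (tracePow_nonneg M u), reTrace_powState hM, hW₁, mul_one, mul_one,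
    add_sub_cancel, le_inv_mul_iff₀ (Real.rpow_pos_of_pos (tracePow_pos hM u) _), mul_one] at h

lemma reTrace_mul_powState_rpow [Nonempty n] {M : Matrix n n ℂ} (hM : M.PosDef) {u : ℝ}
    (hu : u ≠ 0) : reTrace (M * powState M u ^ (1 - u⁻¹)) = tracePow M u ^ u⁻¹ := by
  have hpow : M * M ^ (u * (1 - u⁻¹)) = M ^ u := by
    nth_rw 1 [← CFC.rpow_one M hM.posSemidef.nonneg]
    rw [rpow_mul_rpow hM, mul_sub, mul_one, mul_inv_cancel₀ hu, add_sub_cancel]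
  rw [powState_rpow hM, mul_smul_comm, map_smul, hpow, smul_eq_mul, ← tracePow, neg_sub,
    Real.rpow_sub_one (tracePow_pos hM u).ne', div_mul_cancel₀ _ (tracePow_pos hM u).ne']

lemma reTrace_sandwich_mul_rpow_le_one {P Q R : Matrix n n ℂ} (hP : P.PosDef) (hQ : Q.PosDef)
    (hR : R.PosDef) (hP₁ : reTrace P = 1) (hQ₁ : reTrace Q = 1) (hR₁ : reTrace R = 1)
    {a b c : ℝ} (ha : 0 ≤ a) (hb : 0 < b) (hc : 0 ≤ c) (habc : a + b + c = 1) :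
    reTrace (sandwich (P ^ a) (Q ^ b) * R ^ c) ≤ 1 := by
  have hbc : 0 < b + c := by linarith
  have hpair : ∀ {S : Matrix n n ℂ}, S.PosDef → reTrace S = 1 →
      reTrace (P ^ a * S ^ (b + c)) ≤ 1 := fun hS hS₁ => by
    rw [show b + c = 1 - a by linarith]
    exact reTrace_rpow_mul_rpow_le_one hP hS hP₁ hS₁ ha (by linarith)
  have hyoung := reTrace_rpow_mul_rpow_le (posDef_rpow hQ (b + c)) (posDef_rpow hR (b + c))
    (P ^ (a / 2)) (a := b / (b + c)) (by positivity) ((div_le_one hbc).mpr (by linarith))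
  rw [rpow_rpow hQ, rpow_rpow hR, mul_div_cancel₀ _ hbc.ne',
    show (b + c) * (1 - b / (b + c)) = c by field_simp; ring, conjTranspose_rpow,
    reTrace_mul_comm _ (P ^ (a / 2)), Matrix.mul_assoc (Q ^ (b + c)), rpow_mul_rpow hP,
    add_halves, reTrace_mul_comm (Q ^ (b + c)), reTrace_mul_comm (_ * R ^ (b + c)),
    rpow_mul_rpow_mul hP, add_halves] at hyoung
  rw [sandwich_rpow hP]
  calc reTrace (P ^ (a / 2) * Q ^ b * P ^ (a / 2) * R ^ c)
      ≤ b / (b + c) * reTrace (P ^ a * Q ^ (b + c)) +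
          (1 - b / (b + c)) * reTrace (P ^ a * R ^ (b + c)) := by
        simpa only [Matrix.mul_assoc] using hyoung
    _ ≤ b / (b + c) * 1 + (1 - b / (b + c)) * 1 := by
        gcongr
        · exact hpair hQ hQ₁
        · exact sub_nonneg.mpr ((div_le_one hbc).mpr (by linarith))
        · exact hpair hR hR₁
    _ = 1 := by ring

lemma tracePow_sandwich_rpow_le_one {P Q : Matrix n n ℂ} (hP : P.PosDef) (hQ : Q.PosDef)
    (hP₁ : reTrace P = 1) (hQ₁ : reTrace Q = 1) {a b s : ℝ} (ha : 0 ≤ a) (hb₀ : 0 < b)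
    (hb₁ : b ≤ 1) (hs : s⁻¹ = a + b) : tracePow (sandwich (P ^ a) (Q ^ b)) s ≤ 1 := by
  have := nonempty_of_reTrace_eq_one hP₁
  have hs₀ : 0 < s := inv_pos.mp (by linarith)
  set M := sandwich (P ^ a) (Q ^ b) with hM_def
  have hM : M.PosDef := posDef_sandwich (posDef_rpow hP a) (posDef_rpow hQ b)
  suffices h : tracePow M s ^ s⁻¹ ≤ 1 by
    rwa [Real.rpow_inv_le_iff_of_pos (tracePow_nonneg M s) zero_le_one hs₀, Real.one_rpow] at h
  rcases le_or_gt s 1 with hs₁ | hs₁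
  · calc tracePow M s ^ s⁻¹ ≤ reTrace (M * P ^ (1 - s⁻¹)) :=
          tracePow_le_reTrace_mul_rpow hM hP hP₁ hs₀ hs₁
      _ = reTrace (Q ^ b * P ^ (1 - b)) := by
          rw [hM_def, sandwich_rpow hP, Matrix.mul_assoc, rpow_mul_rpow hP, Matrix.mul_assoc,
            reTrace_mul_comm, Matrix.mul_assoc, rpow_mul_rpow hP, hs]
          ring_nf
      _ ≤ 1 := reTrace_rpow_mul_rpow_le_one hQ hP hQ₁ hP₁ hb₀.le hb₁
  · rw [← reTrace_mul_powState_rpow hM hs₀.ne']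
    exact reTrace_sandwich_mul_rpow_le_one hP hQ (posDef_powState hM s) hP₁ hQ₁
      (reTrace_powState hM s) ha hb₀ (sub_nonneg.mpr (inv_le_one_of_one_le₀ hs₁.le)) (by linarith)

/-- Hölder's inequality for the Schatten quasi-norms. -/
lemma tracePow_sandwich_le {X Y : Matrix n n ℂ} (hX : X.PosDef) (hY : Y.PosDef) {s u v : ℝ}
    (hu : 1 ≤ u) (hv : 0 < v) (huv : s⁻¹ = v⁻¹ + u⁻¹) :
    tracePow (sandwich X Y) s ≤ tracePow X v ^ (s / v) * tracePow Y u ^ (s / u) := by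
  rcases isEmpty_or_nonempty n with hn | hn
  · rw [tracePow_of_isEmpty]
    exact mul_nonneg (Real.rpow_nonneg (tracePow_nonneg X v) _)
      (Real.rpow_nonneg (tracePow_nonneg Y u) _)
  have hu₀ : 0 < u := by linarith
  have hx := tracePow_pos hX v
  have hy := tracePow_pos hY u
  have h := tracePow_sandwich_rpow_le_one (posDef_powState hX v) (posDef_powState hY u)
    (reTrace_powState hX v) (reTrace_powState hY u) (inv_nonneg.mpr hv.le) (inv_pos.mpr hu₀)
    (inv_le_one_of_one_le₀ hu) huv
  rw [powState_rpow_inv hX hv.ne', powState_rpow_inv hY hu₀.ne',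
    sandwich_smul_smul hX (by positivity), tracePow_smul (posDef_sandwich hX hY) (by positivity),
    Real.mul_rpow (by positivity) (by positivity), ← Real.rpow_mul hx.le, ← Real.rpow_mul hy.le,
    neg_mul, neg_mul, Real.rpow_neg hx.le, Real.rpow_neg hy.le, ← mul_inv,
    inv_mul_le_one₀ (by positivity)] at h
  simpa only [div_eq_inv_mul] using h

lemma sandwich_sandwich_rpow_neg_one {Z : Matrix n n ℂ} (hZ : Z.PosDef) (X : Matrix n n ℂ) :
    sandwich Z (sandwich (Z ^ (-1 : ℝ)) X) = X := by
  simp only [sandwich, rpow_rpow hZ, Matrix.mul_assoc, rpow_mul_rpow_mul hZ, rpow_mul_rpow hZ]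
  norm_num [CFC.rpow_zero Z hZ.posSemidef.nonneg]

lemma sandwich_rpow_neg_one {P X : Matrix n n ℂ} (hP : P.PosDef) (hX : X.PosDef) :
    sandwich P X ^ (-1 : ℝ) = sandwich (P ^ (-1 : ℝ)) (X ^ (-1 : ℝ)) := by
  rw [rpow_neg_one_eq_inv (posDef_sandwich hP hX), sandwich, Matrix.mul_inv_rev,
    Matrix.mul_inv_rev, ← rpow_neg_one_eq_inv (posDef_rpow hP _), ← rpow_neg_one_eq_inv hX,
    sandwich, rpow_rpow hP, rpow_rpow hP, mul_comm (-1 : ℝ), Matrix.mul_assoc]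

lemma tracePow_sandwich_eq_tracePow_sandwich_sandwich {P X Z : Matrix n n ℂ} (hP : P.PosDef)
    (hX : X.PosDef) (hZ : Z.PosDef) (s : ℝ) :
    tracePow (sandwich P X) s =
      tracePow (sandwich (sandwich Z P) (sandwich (Z ^ (-1 : ℝ)) X)) s := by
  set Y := sandwich (Z ^ (-1 : ℝ)) X
  have hY : Y.PosDef := posDef_sandwich (posDef_rpow hZ _) hX
  have hXY : X = Z ^ (1 / 2 : ℝ) * Y ^ (1 / 2 : ℝ) * (Z ^ (1 / 2 : ℝ) * Y ^ (1 / 2 : ℝ))ᴴ := by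
    rw [conjTranspose_mul, conjTranspose_rpow, conjTranspose_rpow, Matrix.mul_assoc,
      ← Matrix.mul_assoc (Y ^ _), rpow_half_mul_rpow_half hY, ← Matrix.mul_assoc]
    exact (sandwich_sandwich_rpow_neg_one hZ X).symm
  rw [tracePow_sandwich_comm (posDef_sandwich hZ hP) hY, hXY,
    tracePow_sandwich_mul_conjTranspose hP, conjTranspose_mul, conjTranspose_rpow,
    conjTranspose_rpow, sandwich, sandwich]
  simp only [Matrix.mul_assoc]

lemma tracePow_sandwich_le_mul {P X Z : Matrix n n ℂ} (hP : P.PosDef) (hX : X.PosDef)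
    (hZ : Z.PosDef) {s u v : ℝ} (hu : 1 ≤ u) (hv : 0 < v) (huv : s⁻¹ = v⁻¹ + u⁻¹) :
    tracePow (sandwich P X) s ≤
      tracePow (sandwich P Z) v ^ (s / v) * tracePow (sandwich (Z ^ (-1 : ℝ)) X) u ^ (s / u) := by
  rw [tracePow_sandwich_eq_tracePow_sandwich_sandwich hP hX hZ, tracePow_sandwich_comm hP hZ]
  exact tracePow_sandwich_le (posDef_sandwich hZ hP) (posDef_sandwich (posDef_rpow hZ _) hX)
    hu hv huv

lemma tracePow_sandwich_sandwich_rpow {P X : Matrix n n ℂ} (hP : P.PosDef) (hX : X.PosDef)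
    (c v : ℝ) : tracePow (sandwich P (sandwich X (sandwich X P ^ c))) v =
      tracePow (sandwich X P) ((1 + c) * v) := by
  set D := sandwich X P with hD_def
  have hD : D.PosDef := posDef_sandwich hX hP
  have hfactor : sandwich X (D ^ c) =
      X ^ (1 / 2 : ℝ) * D ^ (c / 2) * (X ^ (1 / 2 : ℝ) * D ^ (c / 2))ᴴ := by
    rw [conjTranspose_mul, conjTranspose_rpow, conjTranspose_rpow, Matrix.mul_assoc,
      rpow_mul_rpow_mul hD, add_halves, ← Matrix.mul_assoc, sandwich]
  have hconj : (X ^ (1 / 2 : ℝ) * D ^ (c / 2))ᴴ * P * (X ^ (1 / 2 : ℝ) * D ^ (c / 2)) =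
      D ^ (1 + c) := by
    calc _ = D ^ (c / 2) * D * D ^ (c / 2) := by
          simp only [conjTranspose_mul, conjTranspose_rpow, hD_def, sandwich, Matrix.mul_assoc]
      _ = D ^ (1 + c) := by
          nth_rw 2 [← CFC.rpow_one D hD.posSemidef.nonneg]
          rw [rpow_mul_rpow hD, rpow_mul_rpow hD]
          ring_nf
  rw [hfactor, tracePow_sandwich_mul_conjTranspose hP, hconj, tracePow_rpow hD]

lemma tracePow_sandwich_rpow_neg_one_sandwich {D X : Matrix n n ℂ} (hD : D.PosDef) (hX : X.PosDef)
    (c u : ℝ) :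
    tracePow (sandwich (sandwich X (D ^ c) ^ (-1 : ℝ)) X) u = tracePow D (-c * u) := by
  rw [tracePow_sandwich_comm (posDef_rpow (posDef_sandwich hX (posDef_rpow hD c)) _) hX,
    sandwich_rpow_neg_one hX (posDef_rpow hD c), sandwich_sandwich_rpow_neg_one hX,
    rpow_rpow hD, tracePow_rpow hD, mul_neg_one]

/-- Equality holds in `tracePow_sandwich_le_mul` for `Z = X ^ (1/2) D ^ (-s/u) X ^ (1/2)`, where
`D = X ^ (1/2) P X ^ (1/2)`. -/
lemma exists_tracePow_sandwich_eq_mul {P X : Matrix n n ℂ} (hP : P.PosDef) (hX : X.PosDef)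
    {s u v : ℝ} (hu : 0 < u) (hv : 0 < v) (huv : s⁻¹ = v⁻¹ + u⁻¹) :
    ∃ Z : Matrix n n ℂ, Z.PosDef ∧ tracePow (sandwich P X) s =
      tracePow (sandwich P Z) v ^ (s / v) * tracePow (sandwich (Z ^ (-1 : ℝ)) X) u ^ (s / u) := by
  have hs : 0 < s := inv_pos.mp (by rw [huv]; positivity)
  have hsum : s / v + s / u = 1 := by
    rw [div_eq_mul_inv, div_eq_mul_inv, ← mul_add, ← huv, mul_inv_cancel₀ hs.ne']
  have hD : (sandwich X P).PosDef := posDef_sandwich hX hP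
  refine ⟨sandwich X (sandwich X P ^ (-(s / u))), posDef_sandwich hX (posDef_rpow hD _), ?_⟩
  rw [tracePow_sandwich_sandwich_rpow hP hX, tracePow_sandwich_rpow_neg_one_sandwich hD hX,
    show (1 + -(s / u)) * v = s by rw [← hsum]; field_simp; ring,
    show - -(s / u) * u = s by field_simp, tracePow_sandwich_comm hP hX]
  rcases isEmpty_or_nonempty n with hn | hn
  · rw [tracePow_of_isEmpty, Real.zero_rpow (by positivity), zero_mul]
  · rw [← Real.rpow_add (tracePow_pos hD s), hsum, Real.rpow_one]

end Holder

section Lieb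

open Set MeasureTheory Real

variable {m n : Type*} [Fintype m] [Fintype n]

lemma reTrace_mul_nonneg {A B : Matrix n n ℂ} (hA : A.PosSemidef) (hB : B.PosSemidef) :
    0 ≤ reTrace (A * B) := by
  classical
  obtain ⟨C, rfl⟩ := (CStarAlgebra.nonneg_iff_eq_star_mul_self (a := B)).mp hB.nonneg
  rw [star_eq_conjTranspose, ← Matrix.mul_assoc, reTrace_mul_comm, ← Matrix.mul_assoc]
  exact reTrace_nonneg (hA.mul_mul_conjTranspose_same C)

lemma reTrace_mul_le_reTrace_mul {A B R : Matrix n n ℂ} (hAB : A ≤ B) (hR : R.PosSemidef) :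
    reTrace (A * R) ≤ reTrace (B * R) := by
  rw [← sub_nonneg, ← map_sub, ← Matrix.sub_mul]
  exact reTrace_mul_nonneg (le_iff.mp hAB) hR

/-- The quadratic form in `X` whose minimum is the parallel sum of `t⁻¹ M` (acting from the left)
and `W` (acting from the right), evaluated at `V`. -/
noncomputable def parallelEnergy (t : ℝ) (M : Matrix n n ℂ) (W : Matrix m m ℂ)
    (V X : Matrix n m ℂ) : ℝ :=
  t⁻¹ * reTrace (M * X * Xᴴ) + reTrace ((V - X) * W * (V - X)ᴴ)

lemma parallelEnergy_add_smul (t : ℝ) (M₀ M₁ : Matrix n n ℂ) (W₀ W₁ : Matrix m m ℂ)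
    (V X : Matrix n m ℂ) (a b : ℝ) :
    parallelEnergy t (a • M₀ + b • M₁) (a • W₀ + b • W₁) V X =
      a * parallelEnergy t M₀ W₀ V X + b * parallelEnergy t M₁ W₁ V X := by
  simp only [parallelEnergy, Matrix.add_mul, Matrix.mul_add, Matrix.smul_mul, Matrix.mul_smul,
    map_add, map_smul, smul_eq_mul]
  ring

lemma normSq_add_normSq_sub_eq {a b t : ℝ} (ha : 0 < a) (hb : 0 < b) (ht : 0 < t) (v x : ℂ) :
    t⁻¹ * (a * Complex.normSq x) + b * Complex.normSq (v - x) =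
      a * b / (a + t * b) * Complex.normSq v +
      (a + t * b) / t * Complex.normSq (x - ((t * b / (a + t * b) : ℝ) : ℂ) * v) := by
  have : a + t * b ≠ 0 := by positivity
  simp only [Complex.normSq_apply, Complex.sub_re, Complex.sub_im, Complex.mul_re, Complex.mul_im,
    Complex.ofReal_re, Complex.ofReal_im]
  field_simp
  ring

variable [DecidableEq m] [DecidableEq n]

lemma parallelEnergy_diagonal (t : ℝ) (a : n → ℝ) (b : m → ℝ) (V X : Matrix n m ℂ) :
    parallelEnergy t (diagonal fun i => (a i : ℂ)) (diagonal fun j => (b j : ℂ)) V X =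
      ∑ i, ∑ j, (t⁻¹ * (a i * Complex.normSq (X i j)) + b j * Complex.normSq (V i j - X i j)) := by
  have hX := reTrace_diagonal_mul_mul_diagonal a (fun _ => 1) X
  have hVX := reTrace_diagonal_mul_mul_diagonal (fun _ => 1) b (V - X)
  simp only [Complex.ofReal_one, diagonal_one, Matrix.mul_one, Matrix.one_mul, mul_one, one_mul,
    Matrix.sub_apply] at hX hVX
  simp only [parallelEnergy, hX, hVX, Finset.mul_sum, Finset.sum_add_distrib]

lemma isLeast_parallelEnergy_diagonal {t : ℝ} (ht : 0 < t) {a : n → ℝ} {b : m → ℝ}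
    (ha : ∀ i, 0 < a i) (hb : ∀ j, 0 < b j) (V : Matrix n m ℂ) :
    IsLeast (range (parallelEnergy t (diagonal fun i => (a i : ℂ)) (diagonal fun j => (b j : ℂ)) V))
      (∑ i, ∑ j, a i * b j / (a i + t * b j) * Complex.normSq (V i j)) := by
  refine ⟨⟨of fun i j => ((t * b j / (a i + t * b j) : ℝ) : ℂ) * V i j, ?_⟩, ?_⟩
  · simp only [parallelEnergy_diagonal, normSq_add_normSq_sub_eq (ha _) (hb _) ht, of_apply,
      sub_self, map_zero, mul_zero, add_zero]
  · rintro _ ⟨X, rfl⟩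
    rw [parallelEnergy_diagonal]
    gcongr with i _ j _
    rw [normSq_add_normSq_sub_eq (ha i) (hb j) ht, le_add_iff_nonneg_right]
    have := ha i
    have := hb j
    exact mul_nonneg (by positivity) (Complex.normSq_nonneg _)

lemma parallelEnergy_conj {U : Matrix n n ℂ} {Y : Matrix m m ℂ} (hU : Uᴴ * U = 1)
    (hY : Yᴴ * Y = 1) (t : ℝ) (M : Matrix n n ℂ) (W : Matrix m m ℂ) (V X : Matrix n m ℂ) :
    parallelEnergy t (U * M * Uᴴ) (Y * W * Yᴴ) V X =
      parallelEnergy t M W (Uᴴ * V * Y) (Uᴴ * X * Y) := by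
  have hY' : ∀ Z : Matrix m n ℂ, Y * (Yᴴ * Z) = Z := fun Z => by
    rw [← Matrix.mul_assoc, mul_eq_one_comm.mp hY, Matrix.one_mul]
  rw [parallelEnergy, parallelEnergy, ← Matrix.sub_mul, ← Matrix.mul_sub]
  generalize V - X = Z
  simp only [conjTranspose_mul, conjTranspose_conjTranspose, Matrix.mul_assoc, hY',
    reTrace_mul_comm U, reTrace_mul_comm Uᴴ, mul_eq_one_comm.mp hU, Matrix.mul_one]

lemma exists_isLeast_parallelEnergy_sum {M : Matrix n n ℂ} {W : Matrix m m ℂ} (hM : M.PosDef)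
    (hW : W.PosDef) (V : Matrix n m ℂ) :
    ∃ (μ : n → ℝ) (w : m → ℝ) (d : n → m → ℝ), (∀ i, 0 < μ i) ∧ (∀ j, 0 < w j) ∧
      (∀ s t : ℝ, reTrace (M ^ s * V * W ^ t * Vᴴ) = ∑ i, ∑ j, μ i ^ s * w j ^ t * d i j) ∧
      ∀ t : ℝ, 0 < t → IsLeast (range (parallelEnergy t M W V))
        (∑ i, ∑ j, μ i * w j / (μ i + t * w j) * d i j) := by
  obtain ⟨U, a, hU, ha, hMU⟩ := exists_unitary_rpow_eq hM
  obtain ⟨Y, b, hY, hb, hWY⟩ := exists_unitary_rpow_eq hW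
  refine ⟨a, b, fun i j => Complex.normSq ((Uᴴ * V * Y) i j), ha, hb, fun s t => ?_,
    fun t ht => ?_⟩
  · rw [hMU, hWY, reTrace_conj_diagonal_mul_conj_diagonal]
  have hsurj : (fun X : Matrix n m ℂ => Uᴴ * X * Y).Surjective := fun X =>
    ⟨U * X * Yᴴ, by
      simp only [Matrix.mul_assoc, hY, Matrix.mul_one]
      rw [← Matrix.mul_assoc, hU, Matrix.one_mul]⟩
  have hM₁ := hMU 1
  have hW₁ := hWY 1
  simp only [CFC.rpow_one M hM.posSemidef.nonneg, CFC.rpow_one W hW.posSemidef.nonneg,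
    rpow_one] at hM₁ hW₁
  have henergy : parallelEnergy t M W V =
      parallelEnergy t (diagonal fun i => (a i : ℂ)) (diagonal fun j => (b j : ℂ)) (Uᴴ * V * Y) ∘
        fun X => Uᴴ * X * Y := by
    funext X
    rw [hM₁, hW₁, parallelEnergy_conj hU hY, Function.comp_apply]
  rw [henergy, hsurj.range_comp]
  exact isLeast_parallelEnergy_diagonal ht ha hb _

lemma rpowIntegrand₀₁_div {p a b t : ℝ} (hp : p ∈ Ioo 0 1) (ha : 0 < a) (hb : 0 < b)
    (ht : 0 < t) :
    b * rpowIntegrand₀₁ p t (a / b) = t ^ (p - 1) * (a * b / (a + t * b)) := by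
  rw [rpowIntegrand₀₁_eq_pow_div hp ht.le (div_pos ha hb).le]
  field_simp
  ring

lemma integrableOn_rpow_mul_parallel {p a b : ℝ} (hp : p ∈ Ioo 0 1) (ha : 0 < a) (hb : 0 < b) :
    IntegrableOn (fun t => t ^ (p - 1) * (a * b / (a + t * b))) (Ioi 0) :=
  IntegrableOn.congr_fun ((integrableOn_rpowIntegrand₀₁_Ioi hp (div_pos ha hb).le).const_mul b)
    (fun _ ht => rpowIntegrand₀₁_div hp ha hb ht) measurableSet_Ioi

lemma rpow_mul_rpow_eq_integral {p a b : ℝ} (hp : p ∈ Ioo 0 1) (ha : 0 < a) (hb : 0 < b) :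
    a ^ p * b ^ (1 - p) = (∫ t in Ioi 0, rpowIntegrand₀₁ p t 1)⁻¹ *
      ∫ t in Ioi 0, t ^ (p - 1) * (a * b / (a + t * b)) := by
  rw [← setIntegral_congr_fun measurableSet_Ioi
      (fun _ ht => rpowIntegrand₀₁_div hp ha hb ht), integral_const_mul, mul_left_comm,
    ← rpow_eq_const_mul_integral hp (div_pos ha hb).le, div_rpow ha.le hb.le, rpow_sub hb,
    rpow_one]
  ring

lemma exists_isLeast_parallelEnergy {M : Matrix n n ℂ} {W : Matrix m m ℂ} (hM : M.PosDef)
    (hW : W.PosDef) (V : Matrix n m ℂ) {p : ℝ} (hp : p ∈ Ioo 0 1) :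
    ∃ φ : ℝ → ℝ, (∀ t, 0 < t → IsLeast (range (parallelEnergy t M W V)) (φ t)) ∧
      IntegrableOn (fun t => t ^ (p - 1) * φ t) (Ioi 0) ∧
      reTrace (M ^ p * V * W ^ (1 - p) * Vᴴ) = (∫ t in Ioi 0, rpowIntegrand₀₁ p t 1)⁻¹ *
        ∫ t in Ioi 0, t ^ (p - 1) * φ t := by
  obtain ⟨μ, w, d, hμ, hw, hsum, hleast⟩ := exists_isLeast_parallelEnergy_sum hM hW V
  have hexpand : (fun t : ℝ => t ^ (p - 1) * ∑ i, ∑ j, μ i * w j / (μ i + t * w j) * d i j) =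
      fun t => ∑ i, ∑ j, t ^ (p - 1) * (μ i * w j / (μ i + t * w j)) * d i j := by
    simp only [Finset.mul_sum, mul_assoc]
  have hint : ∀ i j, IntegrableOn
      (fun t : ℝ => t ^ (p - 1) * (μ i * w j / (μ i + t * w j)) * d i j) (Ioi 0) := fun i j =>
    (integrableOn_rpow_mul_parallel hp (hμ i) (hw j)).mul_const _
  refine ⟨_, hleast, ?_, ?_⟩
  · rw [hexpand]
    exact integrable_finsetSum _ fun i _ => integrable_finsetSum _ fun j _ => hint i j
  · rw [hexpand, integral_finsetSum _ fun i _ => integrable_finsetSum _ fun j _ => hint i j, hsum,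
      Finset.mul_sum]
    refine Finset.sum_congr rfl fun i _ => ?_
    rw [integral_finsetSum _ fun j _ => hint i j, Finset.mul_sum]
    refine Finset.sum_congr rfl fun j _ => ?_
    rw [integral_mul_const, rpow_mul_rpow_eq_integral hp (hμ i) (hw j), mul_assoc]

/-- Lieb's theorem: the parallel sum is an infimum of linear functions of `(M, W)`, hence concave,
and `M ^ p ⊗ W ^ (1 - p)` is an integral of parallel sums. -/
lemma concaveOn_reTrace_rpow_mul_rpow_one_sub (V : Matrix n m ℂ) {p : ℝ} (hp : p ∈ Ioo 0 1) :
    ConcaveOn ℝ ({M : Matrix n n ℂ | M.PosDef} ×ˢ {W : Matrix m m ℂ | W.PosDef})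
      (fun x => reTrace (x.1 ^ p * V * x.2 ^ (1 - p) * Vᴴ)) := by
  refine ⟨convex_posDef.prod convex_posDef, ?_⟩
  rintro ⟨M₀, W₀⟩ ⟨hM₀, hW₀⟩ ⟨M₁, W₁⟩ ⟨hM₁, hW₁⟩ a b ha hb hab
  obtain ⟨φ₀, hφ₀, hint₀, heq₀⟩ := exists_isLeast_parallelEnergy hM₀ hW₀ V hp
  obtain ⟨φ₁, hφ₁, hint₁, heq₁⟩ := exists_isLeast_parallelEnergy hM₁ hW₁ V hp
  obtain ⟨φ, hφ, hint, heq⟩ := exists_isLeast_parallelEnergy (convex_posDef hM₀ hM₁ ha hb hab)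
    (convex_posDef hW₀ hW₁ ha hb hab) V hp
  have hφ_le : ∀ t, 0 < t → a * φ₀ t + b * φ₁ t ≤ φ t := fun t ht => by
    obtain ⟨X, hX⟩ := (hφ t ht).1
    rw [← hX, parallelEnergy_add_smul]
    gcongr
    exacts [(hφ₀ t ht).2 ⟨X, rfl⟩, (hφ₁ t ht).2 ⟨X, rfl⟩]
  have hintegral : a * (∫ t in Ioi 0, t ^ (p - 1) * φ₀ t) +
      b * (∫ t in Ioi 0, t ^ (p - 1) * φ₁ t) ≤ ∫ t in Ioi 0, t ^ (p - 1) * φ t := by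
    rw [← integral_const_mul, ← integral_const_mul,
      ← integral_add (hint₀.const_mul a) (hint₁.const_mul b)]
    refine setIntegral_mono_on ((hint₀.const_mul a).add (hint₁.const_mul b)) hint
      measurableSet_Ioi fun t ht => ?_
    rw [mul_left_comm a, mul_left_comm b, ← mul_add]
    exact mul_le_mul_of_nonneg_left (hφ_le t ht) (rpow_nonneg (le_of_lt ht) _)
  have hc := integral_rpowIntegrand₀₁_one_pos hp
  simp only [Prod.smul_mk, Prod.mk_add_mk, smul_eq_mul] at heq ⊢
  rw [heq, heq₀, heq₁, mul_left_comm a, mul_left_comm b, ← mul_add]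
  gcongr

lemma concaveOn_reTrace_rpow_mul {p : ℝ} (hp₀ : 0 ≤ p) (hp₁ : p ≤ 1) {R : Matrix n n ℂ}
    (hR : R.PosSemidef) :
    ConcaveOn ℝ {A : Matrix n n ℂ | A.PosDef} (fun A => reTrace (A ^ p * R)) := by
  refine ⟨convex_posDef, fun A₀ hA₀ A₁ hA₁ a b ha hb hab => ?_⟩
  have h := reTrace_mul_le_reTrace_mul ((concaveOn_rpow_posDef hp₀ hp₁).2 hA₀ hA₁ ha hb hab) hR
  simpa only [Matrix.add_mul, Matrix.smul_mul, map_add, map_smul] using h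

lemma concaveOn_reTrace_rpow_mul_rpow (V : Matrix n m ℂ) {p q : ℝ} (hp : 0 ≤ p) (hq : 0 ≤ q)
    (hpq : p + q ≤ 1) :
    ConcaveOn ℝ ({M : Matrix n n ℂ | M.PosDef} ×ˢ {W : Matrix m m ℂ | W.PosDef})
      (fun x => reTrace (x.1 ^ p * V * x.2 ^ q * Vᴴ)) := by
  have hswap : ∀ (A : Matrix n n ℂ) (B : Matrix m m ℂ),
      reTrace (A * V * B * Vᴴ) = reTrace (B * (Vᴴ * A * V)) := fun A B => by
    rw [Matrix.mul_assoc, reTrace_mul_comm]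
    simp only [Matrix.mul_assoc]
  rcases hq.eq_or_lt with rfl | hq₀
  · have h := concaveOn_reTrace_rpow_mul hp (by linarith) (posSemidef_self_mul_conjTranspose V)
    refine ((h.comp_linearMap (LinearMap.fst ℝ _ (Matrix m m ℂ))).subset
      (fun x hx => hx.1) (convex_posDef.prod convex_posDef)).congr fun x hx => ?_
    simp [CFC.rpow_zero x.2 hx.2.posSemidef.nonneg, Matrix.mul_assoc]
  rcases hp.eq_or_lt with rfl | hp₀
  · have h := concaveOn_reTrace_rpow_mul hq (by linarith) (posSemidef_conjTranspose_mul_self V)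
    refine ((h.comp_linearMap (LinearMap.snd ℝ (Matrix n n ℂ) _)).subset
      (fun x hx => hx.2) (convex_posDef.prod convex_posDef)).congr fun x hx => ?_
    simp only [Function.comp_apply, LinearMap.snd_apply,
      CFC.rpow_zero x.1 hx.1.posSemidef.nonneg, hswap, Matrix.mul_one]
  refine ⟨convex_posDef.prod convex_posDef, ?_⟩
  rintro ⟨M₀, W₀⟩ ⟨hM₀, hW₀⟩ ⟨M₁, W₁⟩ ⟨hM₁, hW₁⟩ a b ha hb hab
  have hp' : 0 < 1 - p := by linarith
  have hpow : ∀ W : Matrix m m ℂ, W.PosDef → W ^ q = (W ^ (q / (1 - p))) ^ (1 - p) :=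
    fun W hW => by rw [rpow_rpow hW, div_mul_cancel₀ q hp'.ne']
  have hM := convex_posDef hM₀ hM₁ ha hb hab
  have hW := convex_posDef hW₀ hW₁ ha hb hab
  have hconcave := (concaveOn_rpow_posDef (p := q / (1 - p)) (by positivity)
    ((div_le_one hp').mpr (by linarith))).2 hW₀ hW₁ ha hb hab
  refine ((concaveOn_reTrace_rpow_mul_rpow_one_sub V ⟨hp₀, by linarith⟩).2
    (x := (M₀, W₀ ^ (q / (1 - p)))) ⟨hM₀, posDef_rpow hW₀ _⟩
    (y := (M₁, W₁ ^ (q / (1 - p)))) ⟨hM₁, posDef_rpow hW₁ _⟩ ha hb hab).trans' ?_ |>.trans ?_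
  · simp only [hpow _ hW₀, hpow _ hW₁, le_refl]
  · simp only [Prod.smul_mk, Prod.mk_add_mk, hpow _ hW, hswap]
    exact reTrace_mul_le_reTrace_mul (rpow_le_rpow hp'.le (by linarith) hconcave)
      ((posDef_rpow hM p).posSemidef.conjTranspose_mul_mul_same V)

lemma rpow_neg_one_anti {A B : Matrix n n ℂ} (hA : A.PosDef) (hAB : A ≤ B) :
    B ^ (-1 : ℝ) ≤ A ^ (-1 : ℝ) := by
  have hB : B.PosDef := by simpa using hA.add_posSemidef (le_iff.mp hAB)
  open scoped Matrix.Norms.L2Operator in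
  simpa only [CFC.inverse_eq_rpow_neg_one hB.isStrictlyPositive,
    CFC.inverse_eq_rpow_neg_one hA.isStrictlyPositive] using
      CStarAlgebra.ringInverse_le_ringInverse hAB hA.isStrictlyPositive

lemma convexOn_rpow_posDef {r : ℝ} (hr₀ : -1 ≤ r) (hr₁ : r ≤ 0) :
    ConvexOn ℝ {A : Matrix n n ℂ | A.PosDef} (fun A => A ^ r) := by
  refine ⟨convex_posDef, fun A₀ hA₀ A₁ hA₁ a b ha hb hab => ?_⟩
  have hpow : ∀ A : Matrix n n ℂ, A.PosDef → A ^ r = (A ^ (-r)) ^ (-1 : ℝ) := fun A hA => by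
    rw [rpow_rpow hA, neg_mul_neg, mul_one]
  have hinner := (concaveOn_rpow_posDef (p := -r) (by linarith) (by linarith)).2 hA₀ hA₁ ha hb hab
  simp only [hpow _ hA₀, hpow _ hA₁, hpow _ (convex_posDef hA₀ hA₁ ha hb hab)]
  have hA₀' := posDef_rpow hA₀ (-r)
  have hA₁' := posDef_rpow hA₁ (-r)
  exact (rpow_neg_one_anti (convex_posDef hA₀' hA₁' ha hb hab) hinner).trans
    (convexOn_rpow_neg_one.2 hA₀' hA₁' ha hb hab)

end Lieb

section LogConcave

variable {E F : Type*} [AddCommGroup E] [Module ℝ E] [AddCommGroup F] [Module ℝ F]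

/-- Log-concavity of `f` on the convex set `s`, in multiplicative form; `f` is meant to be
nonnegative on `s`. -/
def LogConcaveOn (s : Set E) (f : E → ℝ) : Prop :=
  Convex ℝ s ∧ ∀ ⦃x⦄, x ∈ s → ∀ ⦃y⦄, y ∈ s → ∀ ⦃a b : ℝ⦄, 0 ≤ a → 0 ≤ b → a + b = 1 →
    f x ^ a * f y ^ b ≤ f (a • x + b • y)

variable {s : Set E} {t : Set F} {f g : E → ℝ}

lemma logConcaveOn_const (hs : Convex ℝ s) {c : ℝ} (hc : 0 ≤ c) : LogConcaveOn s (fun _ => c) :=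
  ⟨hs, fun _ _ _ _ a b ha hb hab => by
    rw [← Real.rpow_add_of_nonneg hc ha hb, hab, Real.rpow_one]⟩

lemma logConcaveOn_of_concaveOn_rpow_inv {v : ℝ} (hv : 0 < v) (hf₀ : ∀ x ∈ s, 0 ≤ f x)
    (hf : ConcaveOn ℝ s (fun x => f x ^ v⁻¹)) : LogConcaveOn s f := by
  refine ⟨hf.1, fun x hx y hy a b ha hb hab => ?_⟩
  have hx₀ := hf₀ x hx
  have hy₀ := hf₀ y hy
  have hpow : ∀ z c : ℝ, 0 ≤ z → ((z ^ v⁻¹) ^ c) ^ v = z ^ c := fun z c hz => by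
    rw [← Real.rpow_mul hz, ← Real.rpow_mul hz, mul_right_comm, inv_mul_cancel₀ hv.ne', one_mul]
  have hmean := (Real.geom_mean_le_arith_mean2_weighted ha hb (Real.rpow_nonneg hx₀ v⁻¹)
    (Real.rpow_nonneg hy₀ v⁻¹) hab).trans (hf.2 hx hy ha hb hab)
  calc f x ^ a * f y ^ b = ((f x ^ v⁻¹) ^ a * (f y ^ v⁻¹) ^ b) ^ v := by
        rw [Real.mul_rpow (by positivity) (by positivity), hpow _ _ hx₀, hpow _ _ hy₀]
    _ ≤ (f (a • x + b • y) ^ v⁻¹) ^ v := by gcongr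
    _ = f (a • x + b • y) := Real.rpow_inv_rpow (hf₀ _ (hf.1 hx hy ha hb hab)) hv.ne'

namespace LogConcaveOn

lemma congr (hf : LogConcaveOn s f) (hfg : ∀ x ∈ s, g x = f x) : LogConcaveOn s g := by
  refine ⟨hf.1, fun x hx y hy a b ha hb hab => ?_⟩
  rw [hfg x hx, hfg y hy, hfg _ (hf.1 hx hy ha hb hab)]
  exact hf.2 hx hy ha hb hab

lemma subset (hf : LogConcaveOn s f) {s' : Set E} (hss : s' ⊆ s) (hs : Convex ℝ s') :
    LogConcaveOn s' f :=
  ⟨hs, fun _ hx _ hy _ _ ha hb hab => hf.2 (hss hx) (hss hy) ha hb hab⟩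

lemma comp_fst (hf : LogConcaveOn s f) (ht : Convex ℝ t) :
    LogConcaveOn (s ×ˢ t) (fun x => f x.1) :=
  ⟨hf.1.prod ht, fun _ hx _ hy _ _ ha hb hab => hf.2 hx.1 hy.1 ha hb hab⟩

lemma comp_snd {f : F → ℝ} (hf : LogConcaveOn t f) (hs : Convex ℝ s) :
    LogConcaveOn (s ×ˢ t) (fun x => f x.2) :=
  ⟨hs.prod hf.1, fun _ hx _ hy _ _ ha hb hab => hf.2 hx.2 hy.2 ha hb hab⟩

lemma rpow (hf : LogConcaveOn s f) (hf₀ : ∀ x ∈ s, 0 ≤ f x) {α : ℝ} (hα : 0 ≤ α) :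
    LogConcaveOn s (fun x => f x ^ α) := by
  refine ⟨hf.1, fun x hx y hy a b ha hb hab => ?_⟩
  have hx₀ := hf₀ x hx
  have hy₀ := hf₀ y hy
  calc (f x ^ α) ^ a * (f y ^ α) ^ b = (f x ^ a * f y ^ b) ^ α := by
        rw [Real.mul_rpow (by positivity) (by positivity), ← Real.rpow_mul hx₀, ← Real.rpow_mul hx₀,
          ← Real.rpow_mul hy₀, ← Real.rpow_mul hy₀, mul_comm α a, mul_comm α b]
    _ ≤ f (a • x + b • y) ^ α := by gcongr; exact hf.2 hx hy ha hb hab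

lemma mul (hf : LogConcaveOn s f) (hg : LogConcaveOn s g) (hf₀ : ∀ x ∈ s, 0 ≤ f x)
    (hg₀ : ∀ x ∈ s, 0 ≤ g x) : LogConcaveOn s (fun x => f x * g x) := by
  refine ⟨hf.1, fun x hx y hy a b ha hb hab => ?_⟩
  have hfx := hf₀ x hx
  have hfy := hf₀ y hy
  have hgx := hg₀ x hx
  have hgy := hg₀ y hy
  calc (f x * g x) ^ a * (f y * g y) ^ b = (f x ^ a * f y ^ b) * (g x ^ a * g y ^ b) := by
        rw [Real.mul_rpow hfx hgx, Real.mul_rpow hfy hgy, mul_mul_mul_comm]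
    _ ≤ f (a • x + b • y) * g (a • x + b • y) :=
        mul_le_mul (hf.2 hx hy ha hb hab) (hg.2 hx hy ha hb hab) (by positivity)
          (hf₀ _ (hf.1 hx hy ha hb hab))

lemma of_exists_majorant (hs : Convex ℝ s) (hf₀ : ∀ x ∈ s, 0 ≤ f x)
    (hf : ∀ x ∈ s, ∀ c, f x < c → ∃ g, LogConcaveOn s g ∧ (∀ y ∈ s, f y ≤ g y) ∧ g x ≤ c) :
    LogConcaveOn s f := by
  refine ⟨hs, fun x hx y hy a b ha hb hab => le_of_forall_gt_imp_ge_of_dense fun c hc => ?_⟩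
  obtain ⟨g, hg, hfg, hgc⟩ := hf _ (hs hx hy ha hb hab) c hc
  calc f x ^ a * f y ^ b ≤ g x ^ a * g y ^ b :=
        mul_le_mul (Real.rpow_le_rpow (hf₀ x hx) (hfg x hx) ha)
          (Real.rpow_le_rpow (hf₀ y hy) (hfg y hy) hb) (Real.rpow_nonneg (hf₀ y hy) b)
          (Real.rpow_nonneg ((hf₀ x hx).trans (hfg x hx)) a)
    _ ≤ g (a • x + b • y) := hg.2 hx hy ha hb hab
    _ ≤ c := hgc

lemma of_partial_max {h : E × F → ℝ} (hh : LogConcaveOn (s ×ˢ t) h) (hs : Convex ℝ s)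
    (hle : ∀ x ∈ s, ∀ y ∈ t, h (x, y) ≤ f x) (hmax : ∀ x ∈ s, ∃ y ∈ t, f x = h (x, y)) :
    LogConcaveOn s f := by
  refine ⟨hs, fun x₀ hx₀ x₁ hx₁ a b ha hb hab => ?_⟩
  obtain ⟨y₀, hy₀, hf₀⟩ := hmax x₀ hx₀
  obtain ⟨y₁, hy₁, hf₁⟩ := hmax x₁ hx₁
  have hmem := hh.1 (Set.mk_mem_prod hx₀ hy₀) (Set.mk_mem_prod hx₁ hy₁) ha hb hab
  rw [hf₀, hf₁]
  exact (hh.2 (Set.mk_mem_prod hx₀ hy₀) (Set.mk_mem_prod hx₁ hy₁) ha hb hab).trans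
    (hle _ hmem.1 _ hmem.2)

end LogConcaveOn

end LogConcave

section Epstein

open Set

variable {ι k m : Type*} [Fintype ι] [Fintype m]

/-- The completely positive map `X ↦ ∑ i, (V i)ᴴ X (V i)` with Kraus operators `(V i)ᴴ`. -/
noncomputable def krausMap [Fintype k] (V : ι → Matrix k m ℂ) (X : Matrix k k ℂ) :
    Matrix m m ℂ :=
  ∑ i, (V i)ᴴ * X * V i

/-- The adjoint `Y ↦ ∑ i, (V i) Y (V i)ᴴ` of `krausMap V` for the trace pairing. -/
noncomputable def krausDual (V : ι → Matrix k m ℂ) (Y : Matrix m m ℂ) : Matrix k k ℂ :=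
  ∑ i, V i * Y * (V i)ᴴ

lemma posSemidef_krausDual [Finite k] (V : ι → Matrix k m ℂ) {Y : Matrix m m ℂ}
    (hY : Y.PosSemidef) : (krausDual V Y).PosSemidef :=
  posSemidef_sum _ fun i _ => hY.mul_mul_conjTranspose_same (V i)

variable [Fintype k]

lemma reTrace_krausMap_mul_eq_sum (V : ι → Matrix k m ℂ) (X : Matrix k k ℂ) (Y : Matrix m m ℂ) :
    reTrace (krausMap V X * Y) = ∑ i, reTrace (X * V i * Y * (V i)ᴴ) := by
  simp only [krausMap, Finset.sum_mul, map_sum, Matrix.mul_assoc, reTrace_mul_comm (V _)ᴴ]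

lemma reTrace_krausMap_mul (V : ι → Matrix k m ℂ) (X : Matrix k k ℂ) (Y : Matrix m m ℂ) :
    reTrace (krausMap V X * Y) = reTrace (X * krausDual V Y) := by
  rw [reTrace_krausMap_mul_eq_sum]
  simp only [krausDual, Finset.mul_sum, map_sum, Matrix.mul_assoc]

variable [DecidableEq k] [DecidableEq m]

lemma concaveOn_reTrace_krausMap_rpow_mul_rpow (V : ι → Matrix k m ℂ) {p q : ℝ} (hp : 0 ≤ p)
    (hq : 0 ≤ q) (hpq : p + q ≤ 1) :
    ConcaveOn ℝ ({A : Matrix k k ℂ | A.PosDef} ×ˢ {R : Matrix m m ℂ | R.PosDef})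
      (fun x => reTrace (krausMap V (x.1 ^ p) * x.2 ^ q)) := by
  refine ⟨convex_posDef.prod convex_posDef, fun x hx y hy a b ha hb hab => ?_⟩
  simp only [reTrace_krausMap_mul_eq_sum, Finset.smul_sum, ← Finset.sum_add_distrib]
  exact Finset.sum_le_sum fun i _ =>
    (concaveOn_reTrace_rpow_mul_rpow (V i) hp hq hpq).2 hx hy ha hb hab

variable {V : ι → Matrix k m ℂ}
  (hV : MapsTo (krausMap V) {A : Matrix k k ℂ | A.PosDef} {B : Matrix m m ℂ | B.PosDef})

include hV

lemma concaveOn_tracePow_krausMap_of_le_one [Nonempty m] {p v : ℝ} (hp₀ : 0 ≤ p) (hp₁ : p ≤ 1)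
    (hv₀ : 0 < v) (hv₁ : v ≤ 1) :
    ConcaveOn ℝ {A : Matrix k k ℂ | A.PosDef} (fun A => tracePow (krausMap V (A ^ p)) v ^ v⁻¹) := by
  refine ⟨convex_posDef, fun A₀ hA₀ A₁ hA₁ a b ha hb hab => ?_⟩
  have hM := hV (posDef_rpow (convex_posDef hA₀ hA₁ ha hb hab) p)
  set R := powState (krausMap V ((a • A₀ + b • A₁) ^ p)) v with hR
  have hRpos : R.PosDef := posDef_powState hM v
  have hbound : ∀ A : Matrix k k ℂ, A.PosDef → tracePow (krausMap V (A ^ p)) v ^ v⁻¹ ≤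
      reTrace (A ^ p * krausDual V (R ^ (1 - v⁻¹))) := fun A hA => by
    rw [← reTrace_krausMap_mul]
    exact tracePow_le_reTrace_mul_rpow (hV (posDef_rpow hA p)) hRpos (reTrace_powState hM v) hv₀ hv₁
  have hconcave := (concaveOn_reTrace_rpow_mul hp₀ hp₁ (posSemidef_krausDual V
    (posDef_rpow hRpos (1 - v⁻¹)).posSemidef)).2 hA₀ hA₁ ha hb hab
  simp only [smul_eq_mul] at hconcave ⊢
  rw [← reTrace_mul_powState_rpow hM hv₀.ne', ← hR, reTrace_krausMap_mul]
  refine le_trans ?_ hconcave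
  gcongr
  exacts [hbound A₀ hA₀, hbound A₁ hA₁]

lemma concaveOn_tracePow_krausMap_of_one_le [Nonempty m] {p v : ℝ} (hp : 0 ≤ p) (hv : 1 ≤ v)
    (hvp : v * p ≤ 1) :
    ConcaveOn ℝ {A : Matrix k k ℂ | A.PosDef} (fun A => tracePow (krausMap V (A ^ p)) v ^ v⁻¹) := by
  refine ⟨convex_posDef, fun A₀ hA₀ A₁ hA₁ a b ha hb hab => ?_⟩
  have hv₀ : 0 < v := by linarith
  have hM₀ := hV (posDef_rpow hA₀ p)
  have hM₁ := hV (posDef_rpow hA₁ p)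
  have hR₀ := posDef_powState hM₀ v
  have hR₁ := posDef_powState hM₁ v
  have hpv : p ≤ v⁻¹ := by rwa [← one_div, le_div_iff₀' hv₀]
  have hlieb := (concaveOn_reTrace_krausMap_rpow_mul_rpow V (q := 1 - v⁻¹) hp
    (sub_nonneg.mpr (inv_le_one_of_one_le₀ hv)) (by linarith)).2
    (mk_mem_prod hA₀ hR₀) (mk_mem_prod hA₁ hR₁) ha hb hab
  simp only [reTrace_mul_powState_rpow hM₀ hv₀.ne', reTrace_mul_powState_rpow hM₁ hv₀.ne'] at hlieb
  refine hlieb.trans (reTrace_mul_rpow_le_tracePow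
    (hV (posDef_rpow (convex_posDef hA₀ hA₁ ha hb hab) p)) (convex_posDef hR₀ hR₁ ha hb hab) ?_ hv)
  simp only [map_add, map_smul, reTrace_powState hM₀, reTrace_powState hM₁, smul_eq_mul, mul_one,
    hab]

lemma logConcaveOn_tracePow_krausMap [Nonempty m] {p v : ℝ} (hp₀ : 0 ≤ p) (hp₁ : p ≤ 1)
    (hv : 0 < v) (hvp : v * p ≤ 1) :
    LogConcaveOn {A : Matrix k k ℂ | A.PosDef} (fun A => tracePow (krausMap V (A ^ p)) v) := by
  refine logConcaveOn_of_concaveOn_rpow_inv hv (fun A _ => tracePow_nonneg _ _) ?_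
  rcases le_total v 1 with hv₁ | hv₁
  · exact concaveOn_tracePow_krausMap_of_le_one hV hp₀ hp₁ hv hv₁
  · exact concaveOn_tracePow_krausMap_of_one_le hV hp₀ hv₁ hvp

end Epstein

section Factorization

open Set

variable {ι k m : Type*} [Fintype ι]

lemma krausMap_mul_left [Fintype k] (S : Matrix k k ℂ) (V : ι → Matrix k m ℂ) (X : Matrix k k ℂ) :
    krausMap (fun i => S * V i) X = krausMap V (Sᴴ * X * S) := by
  simp only [krausMap, conjTranspose_mul, Matrix.mul_assoc]

lemma krausMap_mul_right [Fintype k] [Fintype m] (V : ι → Matrix k m ℂ) (T : Matrix m m ℂ)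
    (X : Matrix k k ℂ) :
    krausMap (fun i => V i * T) X = Tᴴ * krausMap V X * T := by
  simp only [krausMap, conjTranspose_mul, Matrix.mul_assoc, Finset.sum_mul, Finset.mul_sum]

lemma krausDual_mul_left [Fintype k] [Fintype m] (S : Matrix k k ℂ) (V : ι → Matrix k m ℂ)
    (Y : Matrix m m ℂ) :
    krausDual (fun i => S * V i) Y = S * krausDual V Y * Sᴴ := by
  simp only [krausDual, conjTranspose_mul, Matrix.mul_assoc, Finset.sum_mul, Finset.mul_sum]

lemma krausDual_mul_right [Fintype m] (V : ι → Matrix k m ℂ) (T : Matrix m m ℂ) (Y : Matrix m m ℂ) :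
    krausDual (fun i => V i * T) Y = krausDual V (T * Y * Tᴴ) := by
  simp only [krausDual, conjTranspose_mul, Matrix.mul_assoc]

lemma krausDual_sandwich [Fintype m] [DecidableEq m] (V : ι → Matrix k m ℂ) (P Y : Matrix m m ℂ) :
    krausDual V (sandwich P Y) = krausDual (fun i => V i * P ^ (1 / 2 : ℝ)) Y := by
  rw [krausDual_mul_right, conjTranspose_rpow, sandwich]

variable [Fintype k] [Fintype m]

/-- Both the completely positive map `krausMap V` and its adjoint preserve positive definiteness. -/
structure IsFaithfulKraus (V : ι → Matrix k m ℂ) : Prop where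
  mapsTo_krausMap : MapsTo (krausMap V) {X : Matrix k k ℂ | X.PosDef} {Y : Matrix m m ℂ | Y.PosDef}
  mapsTo_krausDual :
    MapsTo (krausDual V) {Y : Matrix m m ℂ | Y.PosDef} {X : Matrix k k ℂ | X.PosDef}

lemma sandwich_krausMap [DecidableEq m] (P : Matrix m m ℂ) (V : ι → Matrix k m ℂ)
    (X : Matrix k k ℂ) :
    sandwich P (krausMap V X) = krausMap (fun i => V i * P ^ (1 / 2 : ℝ)) X := by
  rw [krausMap_mul_right, conjTranspose_rpow, sandwich]

lemma sandwich_krausDual [DecidableEq k] (P : Matrix k k ℂ) (V : ι → Matrix k m ℂ)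
    (Y : Matrix m m ℂ) :
    sandwich P (krausDual V Y) = krausDual (fun i => P ^ (1 / 2 : ℝ) * V i) Y := by
  rw [krausDual_mul_left, conjTranspose_rpow, sandwich]

namespace IsFaithfulKraus

variable {V : ι → Matrix k m ℂ} (hV : IsFaithfulKraus V)

include hV

lemma mul_left [DecidableEq k] {S : Matrix k k ℂ} (hS : IsUnit S) :
    IsFaithfulKraus (fun i => S * V i) where
  mapsTo_krausMap X hX := by
    rw [krausMap_mul_left]
    exact hV.mapsTo_krausMap ((hS.posDef_star_left_conjugate_iff).mpr hX)
  mapsTo_krausDual Y hY := by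
    rw [krausDual_mul_left]
    exact posDef_mul_mul_conjTranspose (hV.mapsTo_krausDual hY) hS

lemma mul_right [DecidableEq m] {T : Matrix m m ℂ} (hT : IsUnit T) :
    IsFaithfulKraus (fun i => V i * T) where
  mapsTo_krausMap X hX := by
    rw [krausMap_mul_right]
    exact (hT.posDef_star_left_conjugate_iff).mpr (hV.mapsTo_krausMap hX)
  mapsTo_krausDual Y hY := by
    rw [krausDual_mul_right]
    exact hV.mapsTo_krausDual (posDef_mul_mul_conjTranspose hY hT)

lemma mul_rpow_half [DecidableEq m] {P : Matrix m m ℂ} (hP : P.PosDef) :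
    IsFaithfulKraus (fun i => V i * P ^ (1 / 2 : ℝ)) :=
  hV.mul_right (posDef_rpow hP _).isUnit

variable [DecidableEq k] [DecidableEq m]

lemma logConcaveOn_tracePow_sandwich_krausMap [Nonempty m] {P : Matrix m m ℂ} (hP : P.PosDef)
    {p v : ℝ} (hp₀ : 0 ≤ p) (hp₁ : p ≤ 1) (hv : 0 < v) (hvp : v * p ≤ 1) :
    LogConcaveOn {A : Matrix k k ℂ | A.PosDef}
      (fun A => tracePow (sandwich P (krausMap V (A ^ p))) v) := by
  simp only [sandwich_krausMap]
  exact logConcaveOn_tracePow_krausMap (hV.mul_rpow_half hP).mapsTo_krausMap hp₀ hp₁ hv hvp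

end IsFaithfulKraus

variable [DecidableEq k] [DecidableEq m]

lemma logConcaveOn_tracePow_sandwich_rpow [Nonempty m] {Z : Matrix m m ℂ} (hZ : Z.PosDef)
    {p v : ℝ} (hp₀ : 0 ≤ p) (hp₁ : p ≤ 1) (hv : 0 < v) (hvp : v * p ≤ 1) :
    LogConcaveOn {A : Matrix m m ℂ | A.PosDef} (fun A => tracePow (sandwich (A ^ p) Z) v) := by
  have hmap : ∀ X, krausMap (fun _ : Unit => (1 : Matrix m m ℂ)) X = X := fun X => by
    simp [krausMap]
  have hdual : ∀ X, krausDual (fun _ : Unit => (1 : Matrix m m ℂ)) X = X := fun X => by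
    simp [krausDual]
  have hone : IsFaithfulKraus (fun _ : Unit => (1 : Matrix m m ℂ)) :=
    ⟨fun X hX => by rwa [hmap], fun X hX => by rwa [hdual]⟩
  have hconcave := hone.logConcaveOn_tracePow_sandwich_krausMap hZ hp₀ hp₁ hv hvp
  simp only [hmap] at hconcave
  exact hconcave.congr fun A hA => tracePow_sandwich_comm (posDef_rpow hA p) hZ v

/-- By Hölder's inequality the functional is the minimum over `Z` of the log-concave functions
`tracePow (sandwich (P x) Z) v ^ (s / v) * tracePow (sandwich (Z ^ (-1)) (X x)) u ^ (s / u)`. -/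
lemma logConcaveOn_tracePow_sandwich {E : Type*} [AddCommGroup E] [Module ℝ E] {D : Set E}
    {P X : E → Matrix m m ℂ} (hP : ∀ x ∈ D, (P x).PosDef) (hX : ∀ x ∈ D, (X x).PosDef)
    {s u v : ℝ} (hu : 1 ≤ u) (hv : 0 < v) (huv : s⁻¹ = v⁻¹ + u⁻¹)
    (hPZ : ∀ Z : Matrix m m ℂ, Z.PosDef → LogConcaveOn D (fun x => tracePow (sandwich (P x) Z) v))
    (hXZ : ∀ Z : Matrix m m ℂ, Z.PosDef → LogConcaveOn D (fun x => tracePow (sandwich Z (X x)) u)) :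
    LogConcaveOn D (fun x => tracePow (sandwich (P x) (X x)) s) := by
  have hu₀ : 0 < u := by linarith
  have hs : 0 < s := inv_pos.mp (by rw [huv]; positivity)
  refine LogConcaveOn.of_exists_majorant (hPZ 1 PosDef.one).1 (fun x _ => tracePow_nonneg _ _)
    fun x hx c hc => ?_
  obtain ⟨Z, hZ, hEq⟩ := exists_tracePow_sandwich_eq_mul (hP x hx) (hX x hx) hu₀ hv huv
  refine ⟨fun y => tracePow (sandwich (P y) Z) v ^ (s / v) *
    tracePow (sandwich (Z ^ (-1 : ℝ)) (X y)) u ^ (s / u), ?_,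
    fun y hy => tracePow_sandwich_le_mul (hP y hy) (hX y hy) hZ hu hv huv, hEq.symm.trans_le hc.le⟩
  exact ((hPZ Z hZ).rpow (fun _ _ => tracePow_nonneg _ _) (by positivity)).mul
    ((hXZ _ (posDef_rpow hZ _)).rpow (fun _ _ => tracePow_nonneg _ _) (by positivity))
    (fun _ _ => Real.rpow_nonneg (tracePow_nonneg _ _) _)
    (fun _ _ => Real.rpow_nonneg (tracePow_nonneg _ _) _)

lemma IsFaithfulKraus.logConcaveOn_tracePow_sandwich_rpow_krausMap_rpow [Nonempty m]
    {V : ι → Matrix k m ℂ} (hV : IsFaithfulKraus V) {q a γ : ℝ} (hq₀ : 0 < q) (hq₁ : q ≤ 1)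
    (hqa : q < a) (haq : a ≤ 1 + q) (hγ₀ : 0 ≤ γ) (hγ₁ : γ ≤ a - q) :
    LogConcaveOn ({B : Matrix m m ℂ | B.PosDef} ×ˢ {W : Matrix k k ℂ | W.PosDef})
      (fun x => tracePow (sandwich (x.1 ^ q) (krausMap V (x.2 ^ γ))) a⁻¹) := by
  have ha : 0 < a - q := sub_pos.mpr hqa
  refine logConcaveOn_tracePow_sandwich (u := (a - q)⁻¹) (v := q⁻¹)
    (fun x hx => posDef_rpow hx.1 q) (fun x hx => hV.mapsTo_krausMap (posDef_rpow hx.2 γ))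
    ((one_le_inv₀ ha).mpr (by linarith)) (inv_pos.mpr hq₀) (by simp only [inv_inv]; ring)
    (fun Z hZ => ?_) (fun Z hZ => ?_)
  · exact (logConcaveOn_tracePow_sandwich_rpow hZ hq₀.le hq₁ (inv_pos.mpr hq₀)
      (inv_mul_cancel₀ hq₀.ne').le).comp_fst convex_posDef
  · exact (hV.logConcaveOn_tracePow_sandwich_krausMap hZ hγ₀ (by linarith) (inv_pos.mpr ha)
      ((inv_mul_le_one₀ ha).mpr hγ₁)).comp_snd convex_posDef

end Factorization

section FaithfulStates

open Set

variable {n : Type*}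

lemma posDef_of_smul_one_le [DecidableEq n] {C : Matrix n n ℂ} {δ : ℝ} (hδ : 0 < δ)
    (hC : δ • (1 : Matrix n n ℂ) ≤ C) : C.PosDef := by
  simpa only [add_sub_cancel] using (PosDef.one.smul hδ).add_posSemidef (le_iff.mp hC)

lemma exists_pos_smul_one_le [DecidableEq n] [Finite n] [Nonempty n] {H : Matrix n n ℂ}
    (hH : H.PosDef) : ∃ c : ℝ, 0 < c ∧ c • (1 : Matrix n n ℂ) ≤ H := by
  cases nonempty_fintype n
  simp only [← Algebra.algebraMap_eq_smul_one]
  rw [CFC.exists_pos_algebraMap_le_iff hH.1.isSelfAdjoint, hH.1.spectrum_real_eq_range_eigenvalues]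
  rintro _ ⟨i, rfl⟩
  exact hH.eigenvalues_pos i

variable [Fintype n]

/-- The positive definite density matrices, with the trace condition in real form. -/
def faithfulStates (n : Type*) [Fintype n] : Set (Matrix n n ℂ) :=
  {C | C.PosDef ∧ reTrace C = 1}

lemma mem_faithfulStates_iff (C : Matrix n n ℂ) :
    C ∈ faithfulStates n ↔ C.PosDef ∧ C.trace = 1 :=
  and_congr_right fun hC => ⟨fun htr => Complex.ext htr
    (Complex.nonneg_iff.mp hC.posSemidef.trace_nonneg).2.symm, congrArg Complex.re⟩

lemma convex_faithfulStates : Convex ℝ (faithfulStates n) :=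
  convex_posDef.inter (convex_hyperplane reTrace.isLinear 1)

lemma continuous_reTrace : Continuous (reTrace : Matrix n n ℂ → ℝ) :=
  Complex.continuous_re.comp continuous_id.matrix_trace

lemma faithfulStates_nonempty [Nonempty n] : (faithfulStates n).Nonempty := by
  classical
  exact ⟨_, posDef_powState PosDef.one 1, reTrace_powState PosDef.one 1⟩

variable [DecidableEq n]

lemma powState_mem_faithfulStates [Nonempty n] {M : Matrix n n ℂ} (hM : M.PosDef) (u : ℝ) :
    powState M u ∈ faithfulStates n :=
  ⟨posDef_powState hM u, reTrace_powState hM u⟩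

lemma continuousOn_tracePow_posDef (s : ℝ) :
    ContinuousOn (fun M : Matrix n n ℂ => tracePow M s) {M | M.PosDef} :=
  continuous_reTrace.comp_continuousOn (continuousOn_rpow_posDef s)

lemma continuousOn_powState_posDef [Nonempty n] (u : ℝ) :
    ContinuousOn (fun M : Matrix n n ℂ => powState M u) {M | M.PosDef} :=
  ((continuousOn_tracePow_posDef u).inv₀ fun _ hM => (tracePow_pos hM u).ne').smul
    (continuousOn_rpow_posDef u)

lemma rpow_inv_smul_one_le {C : Matrix n n ℂ} (hC : C.PosDef) {r L : ℝ} (hr : r < 0)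
    (hL : reTrace (C ^ r) ≤ L) : L ^ r⁻¹ • (1 : Matrix n n ℂ) ≤ C := by
  rw [← Algebra.algebraMap_eq_smul_one]
  refine algebraMap_le_of_le_spectrum ?_ hC.1.isSelfAdjoint
  rw [hC.1.spectrum_real_eq_range_eigenvalues]
  rintro _ ⟨i, rfl⟩
  rw [CFC.rpow_eq_cfc_real hC.posSemidef.nonneg, reTrace_cfc hC.1] at hL
  have hpos : ∀ j, 0 < hC.1.eigenvalues j ^ r := fun j =>
    Real.rpow_pos_of_pos (hC.eigenvalues_pos j) r
  have hi : hC.1.eigenvalues i ^ r ≤ L :=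
    (Finset.single_le_sum (fun j _ => (hpos j).le) (Finset.mem_univ i)).trans hL
  calc L ^ r⁻¹ ≤ (hC.1.eigenvalues i ^ r) ^ r⁻¹ :=
        Real.rpow_le_rpow_of_nonpos (hpos i) hi (inv_nonpos.mpr hr.le)
    _ = hC.1.eigenvalues i := Real.rpow_rpow_inv (hC.eigenvalues_pos i).le hr.ne

lemma le_one_of_mem_faithfulStates {C : Matrix n n ℂ} (hC : C ∈ faithfulStates n) : C ≤ 1 := by
  obtain ⟨hpos, htr⟩ := hC
  refine CFC.le_one (R := ℝ) ?_ hpos.1.isSelfAdjoint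
  rw [hpos.1.spectrum_real_eq_range_eigenvalues]
  rintro _ ⟨i, rfl⟩
  have hsum := reTrace_cfc hpos.1 id
  rw [cfc_id ℝ C hpos.1.isSelfAdjoint, htr] at hsum
  rw [hsum]
  exact Finset.single_le_sum (fun j _ => (hpos.eigenvalues_pos j).le) (Finset.mem_univ i)

open scoped Matrix.Norms.L2Operator in
lemma isCompact_faithfulStates_inter_Ici {δ : ℝ} (hδ : 0 < δ) :
    IsCompact (faithfulStates n ∩ Ici (δ • (1 : Matrix n n ℂ))) := by
  have : ProperSpace (Matrix n n ℂ) := FiniteDimensional.proper ℂ _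
  have hEq : faithfulStates n ∩ Ici (δ • (1 : Matrix n n ℂ)) =
      {C | reTrace C = 1} ∩ Ici (δ • (1 : Matrix n n ℂ)) :=
    Set.ext fun C => ⟨fun hC => ⟨hC.1.2, hC.2⟩,
      fun hC => ⟨⟨posDef_of_smul_one_le hδ hC.2, hC.1⟩, hC.2⟩⟩
  have hclosed : IsClosed (faithfulStates n ∩ Ici (δ • (1 : Matrix n n ℂ))) := by
    rw [hEq]
    exact (isClosed_eq continuous_reTrace continuous_const).inter isClosed_Ici
  refine Metric.isCompact_of_isClosed_isBounded hclosed
    ((Metric.isBounded_closedBall (x := 0) (r := 1)).subset fun C hC => ?_)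
  rw [mem_closedBall_zero_iff,
    CStarAlgebra.norm_le_one_iff_of_nonneg C hC.1.1.posSemidef.nonneg]
  exact le_one_of_mem_faithfulStates hC.1

end FaithfulStates

section Duality

open Set Filter Topology

variable {ι k m : Type*} [Fintype ι] [Fintype m]

lemma continuous_krausDual (V : ι → Matrix k m ℂ) : Continuous (krausDual V) :=
  continuous_finsetSum _ fun _ _ =>
    (continuous_const.matrix_mul continuous_id).matrix_mul continuous_const

variable [Fintype k] [DecidableEq k] [DecidableEq m]
  {V : ι → Matrix k m ℂ} (hV : IsFaithfulKraus V)

/-- The dual objective: for `W` in `faithfulStates k` it bounds `tracePow (krausDual V (C ^ r)) u`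
from below over all `C` in `faithfulStates m`. -/
noncomputable def dualTracePow (V : ι → Matrix k m ℂ) (r u : ℝ) (W : Matrix k k ℂ) : ℝ :=
  tracePow (krausMap V (W ^ (1 - u⁻¹))) (1 - r)⁻¹ ^ ((1 - r) * u)

namespace IsFaithfulKraus

include hV

lemma reTrace_rpow_mul_krausMap_le {C : Matrix m m ℂ} (hC : C.PosDef) {W : Matrix k k ℂ}
    (hW : W ∈ faithfulStates k) (r : ℝ) {u : ℝ} (hu : 1 ≤ u) :
    reTrace (C ^ r * krausMap V (W ^ (1 - u⁻¹))) ≤ tracePow (krausDual V (C ^ r)) u ^ u⁻¹ := by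
  rw [reTrace_mul_comm, reTrace_krausMap_mul, reTrace_mul_comm]
  exact reTrace_mul_rpow_le_tracePow (hV.mapsTo_krausDual (posDef_rpow hC r)) hW.1 hW.2 hu

lemma reTrace_rpow_mul_krausMap_powState [Nonempty k] {C : Matrix m m ℂ} (hC : C.PosDef) (r : ℝ)
    {u : ℝ} (hu : 1 ≤ u) :
    reTrace (C ^ r * krausMap V (powState (krausDual V (C ^ r)) u ^ (1 - u⁻¹))) =
      tracePow (krausDual V (C ^ r)) u ^ u⁻¹ := by
  rw [reTrace_mul_comm, reTrace_krausMap_mul, reTrace_mul_comm]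
  exact reTrace_mul_powState_rpow (hV.mapsTo_krausDual (posDef_rpow hC r)) (by positivity)

lemma dualTracePow_le {C : Matrix m m ℂ} (hC : C ∈ faithfulStates m) {W : Matrix k k ℂ}
    (hW : W ∈ faithfulStates k) {r u : ℝ} (hr : r ≤ 0) (hu : 1 ≤ u) :
    dualTracePow V r u W ≤ tracePow (krausDual V (C ^ r)) u := by
  have hu₀ : 0 < u := by linarith
  have hr₀ : 0 < 1 - r := by linarith
  have hH := hV.mapsTo_krausMap (posDef_rpow hW.1 (1 - u⁻¹))
  have hrev := tracePow_le_reTrace_mul_rpow hH hC.1 hC.2 (inv_pos.mpr hr₀)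
    (inv_le_one_of_one_le₀ (by linarith))
  rw [inv_inv, sub_sub_cancel, reTrace_mul_comm] at hrev
  have hle := hrev.trans (hV.reTrace_rpow_mul_krausMap_le hC.1 hW r hu)
  rw [dualTracePow, Real.rpow_mul (tracePow_nonneg _ _)]
  calc (tracePow (krausMap V (W ^ (1 - u⁻¹))) (1 - r)⁻¹ ^ (1 - r)) ^ u
      ≤ (tracePow (krausDual V (C ^ r)) u ^ u⁻¹) ^ u :=
        Real.rpow_le_rpow (Real.rpow_nonneg (tracePow_nonneg _ _) _) hle hu₀.le
    _ = tracePow (krausDual V (C ^ r)) u := Real.rpow_inv_rpow (tracePow_nonneg _ _) hu₀.ne'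

lemma continuousOn_tracePow_krausDual_rpow (r u : ℝ) :
    ContinuousOn (fun C => tracePow (krausDual V (C ^ r)) u) {C : Matrix m m ℂ | C.PosDef} :=
  (continuousOn_tracePow_posDef u).comp
    ((continuous_krausDual V).comp_continuousOn (continuousOn_rpow_posDef r))
    fun _ hC => hV.mapsTo_krausDual (posDef_rpow hC r)

/-- A bound on the objective bounds `Tr C ^ r`, which for `r < 0` keeps the spectrum of `C` away
from zero. -/
lemma exists_smul_one_le_of_tracePow_le [Nonempty k] [Nonempty m] {r u : ℝ} (hr : r < 0)
    (hu : 1 ≤ u) {L : ℝ} (hL : 0 < L) : ∃ δ : ℝ, 0 < δ ∧ ∀ C : Matrix m m ℂ, C.PosDef →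
      tracePow (krausDual V (C ^ r)) u ≤ L → δ • (1 : Matrix m m ℂ) ≤ C := by
  obtain ⟨W, hW⟩ := faithfulStates_nonempty (n := k)
  obtain ⟨c, hc, hcH⟩ := exists_pos_smul_one_le
    (hV.mapsTo_krausMap (posDef_rpow hW.1 (1 - u⁻¹)))
  refine ⟨(L ^ u⁻¹ / c) ^ r⁻¹, by positivity, fun C hC hCL => rpow_inv_smul_one_le hC hr ?_⟩
  rw [le_div_iff₀' hc]
  calc c * reTrace (C ^ r) = reTrace (c • (1 : Matrix m m ℂ) * C ^ r) := by
        rw [smul_mul_assoc, Matrix.one_mul, map_smul, smul_eq_mul]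
    _ ≤ reTrace (krausMap V (W ^ (1 - u⁻¹)) * C ^ r) :=
        reTrace_mul_le_reTrace_mul hcH (posDef_rpow hC r).posSemidef
    _ = reTrace (C ^ r * krausMap V (W ^ (1 - u⁻¹))) := reTrace_mul_comm _ _
    _ ≤ tracePow (krausDual V (C ^ r)) u ^ u⁻¹ := hV.reTrace_rpow_mul_krausMap_le hC hW r hu
    _ ≤ L ^ u⁻¹ := Real.rpow_le_rpow (tracePow_nonneg _ _) hCL (by positivity)

lemma exists_isMinOn_tracePow [Nonempty k] [Nonempty m] {r u : ℝ} (hr : r < 0) (hu : 1 ≤ u) :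
    ∃ C ∈ faithfulStates m,
      IsMinOn (fun C => tracePow (krausDual V (C ^ r)) u) (faithfulStates m) C := by
  obtain ⟨B, hB⟩ := faithfulStates_nonempty (n := m)
  obtain ⟨δ, hδ, hδle⟩ := hV.exists_smul_one_le_of_tracePow_le hr hu
    (tracePow_pos (hV.mapsTo_krausDual (posDef_rpow hB.1 r)) u)
  have hBmem : B ∈ faithfulStates m ∩ Ici (δ • 1) := ⟨hB, hδle B hB.1 le_rfl⟩
  obtain ⟨C, hC, hmin⟩ := (isCompact_faithfulStates_inter_Ici hδ).exists_isMinOn ⟨B, hBmem⟩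
    ((hV.continuousOn_tracePow_krausDual_rpow r u).mono fun C hC => hC.1.1)
  refine ⟨C, hC.1, fun C' hC' => ?_⟩
  rcases le_total (tracePow (krausDual V (C' ^ r)) u) (tracePow (krausDual V (B ^ r)) u) with h | h
  · exact hmin ⟨hC', hδle C' hC'.1 h⟩
  · exact (hmin hBmem).trans h

variable {C₀ C₁ : Matrix m m ℂ} {r u : ℝ}

lemma reTrace_rpow_mul_krausMap_le_of_isMinOn_lineMap [Nonempty k] (hr₀ : -1 ≤ r) (hr₁ : r ≤ 0)
    (hu : 1 ≤ u) (hC₀ : C₀ ∈ faithfulStates m)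
    (hmin : IsMinOn (fun C => tracePow (krausDual V (C ^ r)) u) (faithfulStates m) C₀)
    (hC₁ : C₁ ∈ faithfulStates m) {ε : ℝ} (hε : ε ∈ Ioc (0 : ℝ) 1) {H : Matrix m m ℂ}
    (hH : H = krausMap V
      (powState (krausDual V (AffineMap.lineMap C₀ C₁ ε ^ r)) u ^ (1 - u⁻¹))) :
    reTrace (C₀ ^ r * H) ≤ reTrace (C₁ ^ r * H) := by
  have hCε : AffineMap.lineMap C₀ C₁ ε ∈ faithfulStates m :=
    convex_faithfulStates.lineMap_mem hC₀ hC₁ ⟨hε.1.le, hε.2⟩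
  have hM := hV.mapsTo_krausDual (posDef_rpow hCε.1 r)
  have hHpos : H.PosDef := hH ▸ hV.mapsTo_krausMap (posDef_rpow (posDef_powState hM u) _)
  have hconvex : AffineMap.lineMap C₀ C₁ ε ^ r ≤ (1 - ε) • C₀ ^ r + ε • C₁ ^ r := by
    rw [AffineMap.lineMap_apply_module]
    exact (convexOn_rpow_posDef hr₀ hr₁).2 hC₀.1 hC₁.1 (sub_nonneg.mpr hε.2) hε.1.le
      (sub_add_cancel 1 ε)
  have hchain := calc
    reTrace (C₀ ^ r * H) ≤ tracePow (krausDual V (C₀ ^ r)) u ^ u⁻¹ :=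
        hH ▸ hV.reTrace_rpow_mul_krausMap_le hC₀.1 (powState_mem_faithfulStates hM u) r hu
    _ ≤ tracePow (krausDual V (AffineMap.lineMap C₀ C₁ ε ^ r)) u ^ u⁻¹ :=
        Real.rpow_le_rpow (tracePow_nonneg _ _) (hmin hCε) (by positivity)
    _ = reTrace (AffineMap.lineMap C₀ C₁ ε ^ r * H) :=
        hH ▸ (hV.reTrace_rpow_mul_krausMap_powState hCε.1 r hu).symm
    _ ≤ reTrace (((1 - ε) • C₀ ^ r + ε • C₁ ^ r) * H) :=
        reTrace_mul_le_reTrace_mul hconvex hHpos.posSemidef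
    _ = (1 - ε) * reTrace (C₀ ^ r * H) + ε * reTrace (C₁ ^ r * H) := by
        simp only [Matrix.add_mul, smul_mul_assoc, map_add, map_smul, smul_eq_mul]
  exact le_of_mul_le_mul_left (by linarith) hε.1

/-- The first-order optimality condition, obtained by letting `ε → 0` along the segment. -/
lemma reTrace_rpow_mul_krausMap_le_of_isMinOn [Nonempty k] (hr₀ : -1 ≤ r) (hr₁ : r ≤ 0)
    (hu : 1 ≤ u) (hC₀ : C₀ ∈ faithfulStates m)
    (hmin : IsMinOn (fun C => tracePow (krausDual V (C ^ r)) u) (faithfulStates m) C₀)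
    (hC₁ : C₁ ∈ faithfulStates m) :
    reTrace (C₀ ^ r * krausMap V (powState (krausDual V (C₀ ^ r)) u ^ (1 - u⁻¹))) ≤
      reTrace (C₁ ^ r * krausMap V (powState (krausDual V (C₀ ^ r)) u ^ (1 - u⁻¹))) := by
  let W : ℝ → Matrix k k ℂ := fun ε =>
    powState (krausDual V (AffineMap.lineMap C₀ C₁ ε ^ r)) u ^ (1 - u⁻¹)
  have hpos : ∀ ε ∈ Icc (0 : ℝ) 1, (AffineMap.lineMap C₀ C₁ ε : Matrix m m ℂ).PosDef :=
    fun ε hε => convex_posDef.lineMap_mem hC₀.1 hC₁.1 hε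
  have hW : ContinuousOn W (Icc 0 1) := by
    refine (continuousOn_rpow_posDef _).comp ((continuousOn_powState_posDef u).comp
      ((continuous_krausDual V).comp_continuousOn ((continuousOn_rpow_posDef r).comp
      AffineMap.lineMap_continuous.continuousOn hpos)) fun ε hε => ?_) fun ε hε => ?_
    · exact hV.mapsTo_krausDual (posDef_rpow (hpos ε hε) r)
    · exact posDef_powState (hV.mapsTo_krausDual (posDef_rpow (hpos ε hε) r)) u
  have htendsto : ∀ C : Matrix m m ℂ, Tendsto (fun ε => reTrace (C ^ r * krausMap V (W ε)))
      (𝓝[Ioc 0 1] 0) (𝓝 (reTrace (C ^ r * krausMap V (W 0)))) := fun C => by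
    simp only [reTrace_mul_comm (C ^ r), reTrace_krausMap_mul]
    exact ((continuous_reTrace.comp (continuous_id.matrix_mul continuous_const)).comp_continuousOn
      hW 0 ⟨le_rfl, zero_le_one⟩).mono_left (nhdsWithin_mono 0 Ioc_subset_Icc_self)
  have : (𝓝[Ioc (0 : ℝ) 1] 0).NeBot := left_nhdsWithin_Ioc_neBot zero_lt_one
  have hlim := le_of_tendsto_of_tendsto (htendsto C₀) (htendsto C₁)
    (eventually_of_mem self_mem_nhdsWithin fun ε hε =>
      hV.reTrace_rpow_mul_krausMap_le_of_isMinOn_lineMap hr₀ hr₁ hu hC₀ hmin hC₁ hε rfl)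
  simpa only [W, AffineMap.lineMap_apply_zero] using hlim

lemma exists_tracePow_le_dualTracePow [Nonempty k] [Nonempty m] (hr₀ : -1 ≤ r) (hr₁ : r < 0)
    (hu : 1 ≤ u) : ∃ C ∈ faithfulStates m, ∃ W ∈ faithfulStates k,
      tracePow (krausDual V (C ^ r)) u ≤ dualTracePow V r u W := by
  have hu₀ : 0 < u := by linarith
  have hr₂ : (1 - r)⁻¹ ≠ 0 := inv_ne_zero (by linarith)
  obtain ⟨C₀, hC₀, hmin⟩ := hV.exists_isMinOn_tracePow hr₁ hu
  have hW := powState_mem_faithfulStates (hV.mapsTo_krausDual (posDef_rpow hC₀.1 r)) u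
  refine ⟨C₀, hC₀, _, hW, ?_⟩
  have hH := hV.mapsTo_krausMap (posDef_rpow hW.1 (1 - u⁻¹))
  have hopt := hV.reTrace_rpow_mul_krausMap_le_of_isMinOn hr₀ hr₁.le hu hC₀ hmin
    (powState_mem_faithfulStates hH (1 - r)⁻¹)
  have hdual := reTrace_mul_powState_rpow hH hr₂
  rw [inv_inv, sub_sub_cancel, reTrace_mul_comm] at hdual
  rw [hdual, hV.reTrace_rpow_mul_krausMap_powState hC₀.1 r hu] at hopt
  rw [dualTracePow, Real.rpow_mul (tracePow_nonneg _ _)]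
  calc tracePow (krausDual V (C₀ ^ r)) u = (tracePow (krausDual V (C₀ ^ r)) u ^ u⁻¹) ^ u :=
        (Real.rpow_inv_rpow (tracePow_nonneg _ _) hu₀.ne').symm
    _ ≤ _ := Real.rpow_le_rpow (Real.rpow_nonneg (tracePow_nonneg _ _) _) hopt hu₀.le

end IsFaithfulKraus

end Duality

section OptimizedFunctional

open Set

variable {ι k m : Type*} [Fintype ι] [Fintype k] [Fintype m] [DecidableEq k] [DecidableEq m]

/-- The minimum of `tracePow (krausDual V (C ^ r)) u` over the positive definite density matrices
`C`. -/
noncomputable def infTracePow (V : ι → Matrix k m ℂ) (r u : ℝ) : ℝ :=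
  ⨅ C : faithfulStates m, tracePow (krausDual V ((C : Matrix m m ℂ) ^ r)) u

lemma infTracePow_le (V : ι → Matrix k m ℂ) (r u : ℝ) {C : Matrix m m ℂ}
    (hC : C ∈ faithfulStates m) : infTracePow V r u ≤ tracePow (krausDual V (C ^ r)) u :=
  ciInf_le ⟨0, forall_mem_range.mpr fun _ => tracePow_nonneg _ _⟩ (⟨C, hC⟩ : faithfulStates m)

lemma infTracePow_nonneg (V : ι → Matrix k m ℂ) (r u : ℝ) : 0 ≤ infTracePow V r u :=
  Real.iInf_nonneg fun _ => tracePow_nonneg _ _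

namespace IsFaithfulKraus

variable {V : ι → Matrix k m ℂ} (hV : IsFaithfulKraus V)

include hV

lemma dualTracePow_le_infTracePow [Nonempty m] {W : Matrix k k ℂ} (hW : W ∈ faithfulStates k)
    {r u : ℝ} (hr : r ≤ 0) (hu : 1 ≤ u) : dualTracePow V r u W ≤ infTracePow V r u :=
  have := faithfulStates_nonempty (n := m).to_subtype
  le_ciInf fun C => hV.dualTracePow_le C.2 hW hr hu

lemma exists_infTracePow_eq_dualTracePow [Nonempty k] [Nonempty m] {r u : ℝ} (hr₀ : -1 ≤ r)
    (hr₁ : r < 0) (hu : 1 ≤ u) :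
    ∃ W ∈ faithfulStates k, infTracePow V r u = dualTracePow V r u W := by
  obtain ⟨C, hC, W, hW, hle⟩ := hV.exists_tracePow_le_dualTracePow hr₀ hr₁ hu
  exact ⟨W, hW, le_antisymm ((infTracePow_le V r u hC).trans hle)
    (hV.dualTracePow_le_infTracePow hW hr₁.le hu)⟩

lemma exists_infTracePow_eq_tracePow [Nonempty k] [Nonempty m] {r u : ℝ} (hr : r < 0)
    (hu : 1 ≤ u) :
    ∃ C ∈ faithfulStates m, infTracePow V r u = tracePow (krausDual V (C ^ r)) u := by
  obtain ⟨C, hC, hmin⟩ := hV.exists_isMinOn_tracePow hr hu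
  have := faithfulStates_nonempty (n := m).to_subtype
  exact ⟨C, hC, le_antisymm (infTracePow_le V r u hC) (le_ciInf fun C' => hmin C'.2)⟩

lemma logConcaveOn_infTracePow [Nonempty k] [Nonempty m] {q r u : ℝ} (hq : q ≤ 1) (hr₀ : -1 ≤ r)
    (hr₁ : r < 0) (hqr : 0 < q + r) (hu : 1 ≤ u) (huqr : u * (q + r) ≤ 1) :
    LogConcaveOn {B : Matrix m m ℂ | B.PosDef}
      (fun B => infTracePow (fun i => V i * (B ^ q) ^ (1 / 2 : ℝ)) r u) := by
  have hqru : q + r ≤ u⁻¹ := by rwa [← one_div, le_div_iff₀' (by linarith)]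
  have hu₁ : u⁻¹ ≤ 1 := inv_le_one_of_one_le₀ hu
  have hdual : LogConcaveOn ({B : Matrix m m ℂ | B.PosDef} ×ˢ {W : Matrix k k ℂ | W.PosDef})
      (fun x => dualTracePow (fun i => V i * (x.1 ^ q) ^ (1 / 2 : ℝ)) r u x.2) := by
    simp only [dualTracePow, ← sandwich_krausMap]
    exact (hV.logConcaveOn_tracePow_sandwich_rpow_krausMap_rpow (a := 1 - r) (by linarith) hq
      (by linarith) (by linarith) (by linarith) (by linarith)).rpow
      (fun _ _ => tracePow_nonneg _ _) (mul_nonneg (by linarith) (by linarith))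
  have hdual' := hdual.subset (Set.prod_mono_right fun W hW => hW.1)
    (convex_posDef.prod convex_faithfulStates)
  refine LogConcaveOn.of_partial_max hdual' convex_posDef (fun B hB W hW => ?_) fun B hB => ?_
  · exact (hV.mul_rpow_half (posDef_rpow hB q)).dualTracePow_le_infTracePow hW hr₁.le hu
  · exact (hV.mul_rpow_half (posDef_rpow hB q)).exists_infTracePow_eq_dualTracePow hr₀ hr₁ hu

end IsFaithfulKraus

/-- The optimized trace functional `Q(A, B)`, with conjugation by `K` of `1 ⊗ Y` replaced by an
arbitrary completely positive map in the form `krausDual V Y`. -/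
noncomputable def krausInf (V : ι → Matrix k m ℂ) (p q r s : ℝ) (A : Matrix k k ℂ)
    (B : Matrix m m ℂ) : ℝ :=
  ⨅ C : faithfulStates m,
    tracePow (sandwich (A ^ p) (krausDual V (sandwich (B ^ q) ((C : Matrix m m ℂ) ^ r)))) s

lemma sandwich_krausDual_sandwich (P : Matrix k k ℂ) (V : ι → Matrix k m ℂ) (R Y : Matrix m m ℂ) :
    sandwich P (krausDual V (sandwich R Y)) =
      krausDual (fun i => P ^ (1 / 2 : ℝ) * V i * R ^ (1 / 2 : ℝ)) Y := by
  rw [sandwich_krausDual, krausDual_sandwich]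

lemma krausInf_le (V : ι → Matrix k m ℂ) (p q r s : ℝ) (A : Matrix k k ℂ) (B : Matrix m m ℂ)
    {C : Matrix m m ℂ} (hC : C ∈ faithfulStates m) : krausInf V p q r s A B ≤
      tracePow (sandwich (A ^ p) (krausDual V (sandwich (B ^ q) (C ^ r)))) s :=
  ciInf_le ⟨0, forall_mem_range.mpr fun _ => tracePow_nonneg _ _⟩ (⟨C, hC⟩ : faithfulStates m)

namespace IsFaithfulKraus

variable {V : ι → Matrix k m ℂ} (hV : IsFaithfulKraus V)

include hV

lemma krausInf_le_mul_infTracePow [Nonempty k] [Nonempty m] {p q r s u v : ℝ} {A Z : Matrix k k ℂ}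
    {B : Matrix m m ℂ} (hA : A.PosDef) (hB : B.PosDef) (hZ : Z.PosDef) (hr : r < 0) (hu : 1 ≤ u)
    (hv : 0 < v) (huv : s⁻¹ = v⁻¹ + u⁻¹) :
    krausInf V p q r s A B ≤ tracePow (sandwich (A ^ p) Z) v ^ (s / v) *
      infTracePow (fun i => (Z ^ (-1 : ℝ)) ^ (1 / 2 : ℝ) * V i * (B ^ q) ^ (1 / 2 : ℝ)) r u ^
        (s / u) := by
  have hZV := hV.mul_left (posDef_rpow (posDef_rpow hZ (-1)) (1 / 2)).isUnit
  obtain ⟨C, hC, hEq⟩ :=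
    (hZV.mul_rpow_half (posDef_rpow hB q)).exists_infTracePow_eq_tracePow hr hu
  rw [hEq, ← sandwich_krausDual_sandwich]
  exact (krausInf_le V p q r s A B hC).trans (tracePow_sandwich_le_mul (posDef_rpow hA p)
    (hV.mapsTo_krausDual (posDef_sandwich (posDef_rpow hB q) (posDef_rpow hC.1 r))) hZ hu hv huv)

lemma logConcaveOn_krausInf [Nonempty k] [Nonempty m] {p q r s u v : ℝ} (hp₀ : 0 ≤ p)
    (hp₁ : p ≤ 1) (hq : q ≤ 1) (hr₀ : -1 ≤ r) (hr₁ : r < 0) (hqr : 0 < q + r) (hu : 1 ≤ u)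
    (huqr : u * (q + r) ≤ 1) (hv : 0 < v) (hvp : v * p ≤ 1) (huv : s⁻¹ = v⁻¹ + u⁻¹) :
    LogConcaveOn ({A : Matrix k k ℂ | A.PosDef} ×ˢ {B : Matrix m m ℂ | B.PosDef})
      (fun x => krausInf V p q r s x.1 x.2) := by
  have hu₀ : 0 < u := by linarith
  have hs : 0 < s := inv_pos.mp (by rw [huv]; positivity)
  have := faithfulStates_nonempty (n := m).to_subtype
  refine LogConcaveOn.of_exists_majorant (convex_posDef.prod convex_posDef)
    (fun _ _ => Real.iInf_nonneg fun _ => tracePow_nonneg _ _) fun x hx c hc => ?_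
  obtain ⟨⟨C, hC⟩, hCc⟩ := exists_lt_of_ciInf_lt hc
  obtain ⟨Z, hZ, hEq⟩ := exists_tracePow_sandwich_eq_mul (posDef_rpow hx.1 p)
    (hV.mapsTo_krausDual (posDef_sandwich (posDef_rpow hx.2 q) (posDef_rpow hC.1 r))) hu₀ hv huv
  have hZV := hV.mul_left (posDef_rpow (posDef_rpow hZ (-1)) (1 / 2)).isUnit
  refine ⟨_, ?_, fun y hy => hV.krausInf_le_mul_infTracePow hy.1 hy.2 hZ hr₁ hu hv huv,
    le_trans ?_ (hEq.symm.trans_le hCc.le)⟩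
  · exact ((logConcaveOn_tracePow_sandwich_rpow hZ hp₀ hp₁ hv hvp).comp_fst convex_posDef).rpow
      (fun _ _ => tracePow_nonneg _ _) (by positivity) |>.mul
      (((hZV.logConcaveOn_infTracePow hq hr₀ hr₁ hqr hu huqr).comp_snd convex_posDef).rpow
      (fun _ _ => infTracePow_nonneg _ _ _) (by positivity))
      (fun _ _ => Real.rpow_nonneg (tracePow_nonneg _ _) _)
      (fun _ _ => Real.rpow_nonneg (infTracePow_nonneg _ _ _) _)
  · rw [sandwich_krausDual_sandwich]
    exact mul_le_mul_of_nonneg_left (Real.rpow_le_rpow (infTracePow_nonneg _ _ _)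
      (infTracePow_le _ r u hC) (by positivity)) (Real.rpow_nonneg (tracePow_nonneg _ _) _)

end IsFaithfulKraus

end OptimizedFunctional

section BlockColumn

variable {n m : Type*} [Fintype n] [Fintype m]

/-- The blocks of columns of `K`: the restrictions of `K` to the subspaces `eᵢ ⊗ ℂᵐ`. -/
def blockColumn (K : Matrix (n × m) (n × m) ℂ) (i : n) : Matrix (n × m) m ℂ :=
  K.submatrix id (Prod.mk i)

lemma krausMap_blockColumn (K X : Matrix (n × m) (n × m) ℂ) :
    krausMap (blockColumn K) X = ∑ i, (Kᴴ * X * K).submatrix (Prod.mk i) (Prod.mk i) :=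
  rfl

variable [DecidableEq n]

lemma krausDual_blockColumn (K : Matrix (n × m) (n × m) ℂ) (Y : Matrix m m ℂ) :
    krausDual (blockColumn K) Y = K * ((1 : Matrix n n ℂ) ⊗ₖ Y) * Kᴴ := by
  ext x y
  simp [krausDual, blockColumn, Matrix.sum_apply, Matrix.mul_apply, Fintype.sum_prod_type,
    one_apply, ite_mul]

variable [DecidableEq m]

lemma isFaithfulKraus_blockColumn [Nonempty n] {K : Matrix (n × m) (n × m) ℂ} (hK : IsUnit K) :
    IsFaithfulKraus (blockColumn K) where
  mapsTo_krausMap X hX := by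
    rw [krausMap_blockColumn]
    exact posDef_sum Finset.univ_nonempty fun i _ =>
      ((hK.posDef_star_left_conjugate_iff).mpr hX).submatrix (Prod.mk_right_injective i)
  mapsTo_krausDual Y hY := by
    rw [krausDual_blockColumn]
    exact posDef_mul_mul_conjTranspose (PosDef.one.kronecker hY) hK

lemma Qinf_eq_krausInf {K : Matrix (n × m) (n × m) ℂ} (hK : IsUnit K) (p q r s : ℝ)
    {A : Matrix (n × m) (n × m) ℂ} {B : Matrix m m ℂ} (hA : A.PosDef) (hB : B.PosDef) :
    Qinf K p q r s A B = krausInf (blockColumn K) p q r s A B := by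
  have hvalue : ∀ C : Matrix m m ℂ, C.PosDef →
      tracePow (sandwich (A ^ p) (krausDual (blockColumn K) (sandwich (B ^ q) (C ^ r)))) s =
        (Matrix.trace (matPow (matPow A (p / 2) * K * ((1 : Matrix n n ℂ) ⊗ₖ
          (matPow B (q / 2) * matPow C r * matPow B (q / 2))) * Kᴴ * matPow A (p / 2)) s)).re := by
    intro C hC
    have hpos := posDef_sandwich (posDef_rpow hA p) (posDef_mul_mul_conjTranspose
      ((PosDef.one (n := n) (R := ℂ)).kronecker
        (posDef_sandwich (posDef_rpow hB q) (posDef_rpow hC r))) hK)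
    rw [krausDual_blockColumn, tracePow, ← matPow_eq_rpow hpos, sandwich_rpow hA, sandwich_rpow hB,
      matPow_eq_rpow hA, matPow_eq_rpow hB, matPow_eq_rpow hC]
    simp only [Matrix.mul_assoc]
    rfl
  refine congrArg sInf (Set.ext fun x => ⟨?_, ?_⟩)
  · rintro ⟨C, hC, htr, rfl⟩
    exact ⟨⟨C, (mem_faithfulStates_iff C).mpr ⟨hC, htr⟩⟩, hvalue C hC⟩
  · rintro ⟨⟨C, hC⟩, rfl⟩
    exact ⟨C, hC.1, ((mem_faithfulStates_iff C).mp hC).2, hvalue C hC.1⟩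

lemma Qinf_of_isEmpty [IsEmpty (n × m)] (K : Matrix (n × m) (n × m) ℂ) (p q r s : ℝ)
    (A : Matrix (n × m) (n × m) ℂ) (B : Matrix m m ℂ) : Qinf K p q r s A B = 0 := by
  refine le_antisymm (Real.sInf_nonpos ?_) (Real.sInf_nonneg ?_) <;>
  · rintro x ⟨C, -, -, rfl⟩
    simp [Matrix.trace]

end BlockColumn

theorem stmt1_general {n₁ n₂ : Type*} [Fintype n₁] [DecidableEq n₁] [Fintype n₂] [DecidableEq n₂]
    {K : Matrix (n₁ × n₂) (n₁ × n₂) ℂ} (hK : IsUnit K) {p q r s : ℝ} (hp₀ : 0 < p) (hp₁ : p ≤ 1)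
    (hq : q ≤ 1) (hr₀ : -1 ≤ r) (hr₁ : r < 0) (hqr : 0 < q + r)
    (hs₀ : (q + r) / (p + q + r) ≤ s) (hs₁ : s ≤ 1 / (p + q + r)) :
    LogConcaveOn ({A : Matrix (n₁ × n₂) (n₁ × n₂) ℂ | A.PosDef} ×ˢ
      {B : Matrix n₂ n₂ ℂ | B.PosDef}) (fun x => Qinf K p q r s x.1 x.2) := by
  have hpqr : 0 < p + q + r := by linarith
  rw [div_le_iff₀ hpqr] at hs₀
  rw [le_div_iff₀ hpqr] at hs₁
  have hs : 0 < s := pos_of_mul_pos_left (hqr.trans_le hs₀) hpqr.le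
  rcases isEmpty_or_nonempty (n₁ × n₂) with hempty | hne
  · simp only [Qinf_of_isEmpty]
    refine logConcaveOn_const ?_ le_rfl
    exact convex_posDef.prod convex_posDef
  obtain ⟨_, _⟩ := nonempty_prod.mp hne
  refine LogConcaveOn.congr ?_ fun x hx => Qinf_eq_krausInf hK p q r s hx.1 hx.2
  refine (isFaithfulKraus_blockColumn hK).logConcaveOn_krausInf (u := s * (p + q + r) / (q + r))
    (v := s * (p + q + r) / p) hp₀.le hp₁ hq hr₀ hr₁ hqr ((one_le_div hqr).mpr hs₀) ?_ ?_ ?_ ?_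
  · rwa [div_mul_cancel₀ _ hqr.ne']
  · positivity
  · rwa [div_mul_cancel₀ _ hp₀.ne']
  · field_simp
    ring

/-- joint log-concavity of `(A,B) ↦ Q(A,B)` for
`0 < p,q ≤ 1`, `−1 ≤ r < 0`, `q+r > 0`, `p+q+r > 0` and
`(q+r)/(p+q+r) ≤ s < 1/(p+q+r)`. -/
theorem stmt1 {n₁ n₂ : Type*} [Fintype n₁] [DecidableEq n₁]
    [Fintype n₂] [DecidableEq n₂]
    (K : Matrix (n₁ × n₂) (n₁ × n₂) ℂ) (hK : IsUnit K)
    (p q r s : ℝ) (hp0 : 0 < p) (hp1 : p ≤ 1) (hq0 : 0 < q) (hq1 : q ≤ 1)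
    (hr0 : -1 ≤ r) (hr1 : r < 0) (hqr : 0 < q + r) (hpqr : 0 < p + q + r)
    (hs1 : (q + r) / (p + q + r) ≤ s) (hs2 : s < 1 / (p + q + r))
    (A₀ A₁ : Matrix (n₁ × n₂) (n₁ × n₂) ℂ) (hA₀ : A₀.PosDef) (hA₁ : A₁.PosDef)
    (B₀ B₁ : Matrix n₂ n₂ ℂ) (hB₀ : B₀.PosDef) (hB₁ : B₁.PosDef)
    (t : ℝ) (ht0 : 0 ≤ t) (ht1 : t ≤ 1) :
    Qinf K p q r s ((t : ℂ) • A₀ + ((1 - t : ℝ) : ℂ) • A₁)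
        ((t : ℂ) • B₀ + ((1 - t : ℝ) : ℂ) • B₁) ≥
      Qinf K p q r s A₀ B₀ ^ t * Qinf K p q r s A₁ B₁ ^ (1 - t) := by
  simp only [Complex.coe_smul]
  exact (stmt1_general hK hp0 hp1 hq1 hr0 hr1 hqr hs1 hs2.le).2 (x := (A₀, B₀)) ⟨hA₀, hB₀⟩
    (y := (A₁, B₁)) ⟨hA₁, hB₁⟩ ht0 (sub_nonneg.mpr ht1) (add_sub_cancel t 1)
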